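/- arXiv:1302.0517 — 2 statements merged into one kernel-verified Lean document; each statement's English description precedes it below -/
import Mathlib

section
/- For every integer n > 2^6 = 64, every positive integer N, and every n-linear form U : (ℂ^N)^n → ℂ, one has (∑_{i₁,…,iₙ=1}^N |U(e_{i₁},…,e_{iₙ})|^{2n/(n+1)})^{(n+1)/(2n)} ≤ 0.99632125476 · (n-1)^{0.304975} · ‖U‖. -/
open Real

/-- The Bohnenblust--Hille quantity of an `n`-linear form on `ℓ_∞^N` over `ℂ`:
`(∑_{i₁,…,iₙ} |U(e_{i₁},…,e_{iₙ})|^{2n/(n+1)})^{(n+1)/(2n)}`. -/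
noncomputable def BHcomplex (n N : ℕ)
    (U : ContinuousMultilinearMap ℂ (fun _ : Fin n => (Fin N → ℂ)) ℂ) : ℝ :=
  (∑ i : Fin n → Fin N,
      ‖U (fun k => Pi.single (i k) (1 : ℂ))‖ ^ ((2 * n : ℝ) / (n + 1)))
    ^ ((n + 1 : ℝ) / (2 * n))


/-- Entropy subadditivity (two coordinates), unnormalised. -/
lemma bh_subadd {α β : Type*} [Fintype α] [Fintype β] (f : α → β → ℝ) (hf : ∀ a b, 0 ≤ f a b) :
    0 ≤ ∑ a, ∑ b, f a b * (log (f a b) + log (∑ a, ∑ b, f a b) - log (∑ b, f a b)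
      - log (∑ a, f a b)) := by
  set S := ∑ a, ∑ b, f a b with hS
  have hR : ∀ a, 0 ≤ ∑ b, f a b := fun a => Finset.sum_nonneg fun b _ => hf a b
  have hC : ∀ b, 0 ≤ ∑ a, f a b := fun b => Finset.sum_nonneg fun a _ => hf a b
  have hS0 : 0 ≤ S := Finset.sum_nonneg fun a _ => hR a
  have key : ∀ a b, f a b - (∑ b, f a b) * (∑ a, f a b) / S ≤
      f a b * (log (f a b) + log S - log (∑ b, f a b) - log (∑ a, f a b)) := by
    intro a b
    rcases (hf a b).eq_or_lt with h | h
    · rw [← h]; simp only [zero_mul, zero_sub]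
      have := div_nonneg (mul_nonneg (hR a) (hC b)) hS0
      linarith
    · have h1 : 0 < ∑ b, f a b := lt_of_lt_of_le h
        (Finset.single_le_sum (f := fun b => f a b) (fun b _ => hf a b) (Finset.mem_univ b))
      have h2 : 0 < ∑ a, f a b := lt_of_lt_of_le h
        (Finset.single_le_sum (f := fun a => f a b) (fun a _ => hf a b) (Finset.mem_univ a))
      have h3 : 0 < S := lt_of_lt_of_le h1
        (Finset.single_le_sum (f := fun a => ∑ b, f a b) (fun a _ => hR a) (Finset.mem_univ a))
      set R := ∑ b, f a b
      set C := ∑ a, f a b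
      have h4 := Real.log_le_sub_one_of_pos (x := R * C / (S * f a b)) (by positivity)
      rw [Real.log_div (by positivity) (by positivity), Real.log_mul h1.ne' h2.ne',
        Real.log_mul h3.ne' h.ne'] at h4
      have h5 := mul_le_mul_of_nonneg_left h4 h.le
      have h6 : f a b * (R * C / (S * f a b) - 1) = R * C / S - f a b := by
        field_simp
      nlinarith
  have hsum : ∑ a, ∑ b, (f a b - (∑ b, f a b) * (∑ a, f a b) / S) = 0 := by
    simp only [Finset.sum_sub_distrib, ← Finset.mul_sum, ← Finset.sum_div]
    rw [← Finset.sum_mul]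
    rw [Finset.sum_comm (s := Finset.univ) (t := Finset.univ) (f := fun b a => f a b), ← hS]
    by_cases h0 : S = 0
    · simp [h0]
    · field_simp; ring
  calc (0:ℝ) = _ := hsum.symm
    _ ≤ _ := Finset.sum_le_sum fun a _ => Finset.sum_le_sum fun b _ => key a b

lemma bh_sum_cons {n : ℕ} {ι : Type*} [Fintype ι] (F : (Fin (n+1) → ι) → ℝ) :
    ∑ i, F i = ∑ t, ∑ j : Fin n → ι, F (Fin.cons t j) := by
  rw [← (Fin.consEquiv (fun _ => ι)).sum_comp, Fintype.sum_prod_type]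
  rfl

lemma bh_sum_insertNth {n : ℕ} {ι : Type*} [Fintype ι] (k : Fin (n+1)) (F : (Fin (n+1) → ι) → ℝ) :
    ∑ i, F i = ∑ j : Fin n → ι, ∑ t, F (k.insertNth t j) := by
  rw [← (Fin.insertNthEquiv (fun _ => ι) k).sum_comp, Fintype.sum_prod_type, Finset.sum_comm]
  rfl

/-- Han's inequality, unnormalised. -/
lemma bh_han {ι : Type*} [Fintype ι] [DecidableEq ι] : ∀ (n : ℕ) (f : (Fin n → ι) → ℝ), (∀ i, 0 ≤ f i) →
    ∑ k, ∑ i, f i * (log (∑ t, f (Function.update i k t)) - log (f i)) ≤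
      ∑ i, f i * (log (∑ i, f i) - log (f i)) := by
  intro n
  induction n with
  | zero => intro f hf; simp
  | succ n ih =>
    intro f hf
    rw [Fin.sum_univ_succ]
    have h1 : ∀ k : Fin n, ∑ i, f i * (log (∑ t, f (Function.update i k.succ t)) - log (f i))
        = ∑ t, ∑ j : Fin n → ι, f (Fin.cons t j) *
          (log (∑ s, f (Fin.cons t (Function.update j k s))) - log (f (Fin.cons t j))) := by
      intro k
      rw [bh_sum_cons]
      simp only [Fin.cons_update]
    simp only [h1]
    rw [Finset.sum_comm]
    have h2 : ∑ t, ∑ k, ∑ j : Fin n → ι, f (Fin.cons t j) *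
          (log (∑ s, f (Fin.cons t (Function.update j k s))) - log (f (Fin.cons t j))) ≤
        ∑ t, ∑ j : Fin n → ι, f (Fin.cons t j) *
          (log (∑ j, f (Fin.cons t j)) - log (f (Fin.cons t j))) :=
      Finset.sum_le_sum fun t _ => ih (fun j => f (Fin.cons t j)) fun j => hf _
    have h3 := bh_subadd (fun t (j : Fin n → ι) => f (Fin.cons t j)) (fun t j => hf _)
    rw [bh_sum_cons, bh_sum_cons (fun i => f i * (log (∑ i, f i) - log (f i))), bh_sum_cons f]
    simp only [Fin.update_cons_zero]
    have h4 : ∀ (a b c : ι → (Fin n → ι) → ℝ), (0 ≤ ∑ t, ∑ j, (c t j - a t j - b t j)) →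
        ∑ t, ∑ j, a t j + ∑ t, ∑ j, b t j ≤ ∑ t, ∑ j, c t j := by
      intro a b c h
      simp only [Finset.sum_sub_distrib] at h
      linarith
    refine le_trans (add_le_add le_rfl h2) (h4 _ _ _ ?_)
    refine h3.trans (le_of_eq ?_)
    refine Finset.sum_congr rfl fun t _ => Finset.sum_congr rfl fun j _ => ?_
    ring

lemma bh_blei_one {β τ : Type*} [Fintype β] [Fintype τ] (a f : β → τ → ℝ)
    (hf : ∀ j t, 0 ≤ f j t) (hfa : ∀ j t, 0 < f j t → 0 < a j t)
    (c p D S : ℝ) (hD : 0 < D) (hS : 0 < S)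
    (hSe : ∑ j, ∑ t, f j t = S)
    (h : ∑ j, (∑ t, a j t ^ 2) ^ c ≤ D ^ p) :
    ∑ j, ∑ t, f j t * (c * log (∑ t, a j t ^ 2) + log S - p * log D - log (∑ t, f j t)) ≤ 0 := by
  have key : ∀ j, ∑ t, f j t * (c * log (∑ t, a j t ^ 2) + log S - p * log D - log (∑ t, f j t))
      ≤ S / D ^ p * (∑ t, a j t ^ 2) ^ c - ∑ t, f j t := by
    intro j
    rw [← Finset.sum_mul]
    have hA : 0 ≤ ∑ t, a j t ^ 2 := Finset.sum_nonneg fun t _ => sq_nonneg _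
    rcases (Finset.sum_nonneg fun t (_ : t ∈ Finset.univ) => hf j t).eq_or_lt with h0 | h0
    · rw [← h0]
      simp only [zero_mul, sub_zero]
      have := Real.rpow_nonneg hA c
      positivity
    · obtain ⟨t, -, ht⟩ : ∃ t ∈ Finset.univ, 0 < f j t := by
        by_contra! hcon
        exact absurd (Finset.sum_nonpos hcon) (not_le.mpr h0)
      have hA' : 0 < ∑ t, a j t ^ 2 := lt_of_lt_of_le (pow_pos (hfa j t ht) 2)
        (Finset.single_le_sum (f := fun t => a j t ^ 2) (fun t _ => sq_nonneg _)
          (Finset.mem_univ t))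
      set L := ∑ t, f j t
      set A := ∑ t, a j t ^ 2
      have hAc : 0 < A ^ c := Real.rpow_pos_of_pos hA' c
      have hDp : 0 < D ^ p := Real.rpow_pos_of_pos hD p
      have h4 := Real.log_le_sub_one_of_pos (x := A ^ c * S / (D ^ p * L)) (by positivity)
      rw [Real.log_div (by positivity) (by positivity), Real.log_mul hAc.ne' hS.ne',
        Real.log_mul hDp.ne' h0.ne', Real.log_rpow hA', Real.log_rpow hD] at h4
      have h5 := mul_le_mul_of_nonneg_left h4 h0.le
      have h6 : L * (A ^ c * S / (D ^ p * L) - 1) = S / D ^ p * A ^ c - L := by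
        field_simp
      rw [h6] at h5
      linarith
  refine (Finset.sum_le_sum fun j _ => key j).trans ?_
  rw [Finset.sum_sub_distrib, ← Finset.mul_sum, hSe]
  have hDp : 0 < D ^ p := Real.rpow_pos_of_pos hD p
  have : S / D ^ p * ∑ j, (∑ t, a j t ^ 2) ^ c ≤ S / D ^ p * D ^ p :=
    mul_le_mul_of_nonneg_left h (by positivity)
  rw [div_mul_cancel₀ _ hDp.ne'] at this
  linarith

lemma bh_blei_two {β τ : Type*} [Fintype β] [Fintype τ] (a f : β → τ → ℝ)
    (hf : ∀ j t, 0 ≤ f j t) (hfa : ∀ j t, 0 < f j t → 0 < a j t) :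
    ∑ j, ∑ t, f j t * (2 * log (a j t) + log (∑ t, f j t) - log (∑ t, a j t ^ 2) - log (f j t))
      ≤ 0 := by
  refine Finset.sum_nonpos fun j _ => ?_
  have hA : 0 ≤ ∑ t, a j t ^ 2 := Finset.sum_nonneg fun t _ => sq_nonneg _
  have hL : 0 ≤ ∑ t, f j t := Finset.sum_nonneg fun t _ => hf j t
  set L := ∑ t, f j t with hLd
  set A := ∑ t, a j t ^ 2 with hAd
  have key : ∀ t, f j t * (2 * log (a j t) + log L - log A - log (f j t)) ≤
      a j t ^ 2 * (L / A) - f j t := by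
    intro t
    rcases (hf j t).eq_or_lt with h | h
    · rw [← h]; simp only [zero_mul, sub_zero]; positivity
    · have ha := hfa j t h
      have hA' : 0 < A := lt_of_lt_of_le (pow_pos ha 2)
        (Finset.single_le_sum (f := fun t => a j t ^ 2) (fun t _ => sq_nonneg _)
          (Finset.mem_univ t))
      have hL' : 0 < L := lt_of_lt_of_le h
        (Finset.single_le_sum (f := fun t => f j t) (fun t _ => hf j t) (Finset.mem_univ t))
      have h4 := Real.log_le_sub_one_of_pos (x := a j t ^ 2 * L / (A * f j t)) (by positivity)
      rw [Real.log_div (by positivity) (by positivity), Real.log_mul (by positivity) hL'.ne',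
        Real.log_mul hA'.ne' h.ne', Real.log_pow] at h4
      have h5 := mul_le_mul_of_nonneg_left h4 h.le
      have h6 : f j t * (a j t ^ 2 * L / (A * f j t) - 1) = a j t ^ 2 * (L / A) - f j t := by
        field_simp
      rw [h6] at h5
      push_cast at h5
      linarith
  refine (Finset.sum_le_sum fun t _ => key t).trans ?_
  rw [Finset.sum_sub_distrib, ← Finset.sum_mul, ← hLd, ← hAd]
  by_cases h0 : A = 0
  · rw [h0]; simp [hL]
  · field_simp; simp

/-- Blei's interpolation inequality. -/
lemma bh_blei {ι : Type*} [Fintype ι] [DecidableEq ι] (m : ℕ) (hm : 1 ≤ m)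
    (a : (Fin (m+1) → ι) → ℝ) (ha : ∀ i, 0 ≤ a i) (D : ℝ) (hD : 0 < D)
    (h : ∀ k : Fin (m+1), ∑ j : Fin m → ι, (∑ t, a (k.insertNth t j) ^ 2) ^ ((m : ℝ) / (m+1))
      ≤ D ^ ((2 * m : ℝ) / (m+1))) :
    ∑ i, a i ^ ((2 * (m+1) : ℝ) / (m+2)) ≤ D ^ ((2 * (m+1) : ℝ) / (m+2)) := by
  have hm' : (0:ℝ) < m := by exact_mod_cast hm
  set r : ℝ := (2 * (m+1) : ℝ) / (m+2) with hr
  have hr0 : 0 < r := by positivity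
  set f : (Fin (m+1) → ι) → ℝ := fun i => a i ^ r with hfd
  have hf : ∀ i, 0 ≤ f i := fun i => Real.rpow_nonneg (ha i) r
  have hfa : ∀ i, 0 < f i → 0 < a i := by
    intro i hi
    rcases (ha i).eq_or_lt with h0 | h0
    · simp only [hfd, ← h0, Real.zero_rpow hr0.ne', lt_irrefl] at hi
    · exact h0
  have hlog : ∀ i, f i * log (f i) = r * (f i * log (a i)) := by
    intro i
    rcases (ha i).eq_or_lt with h0 | h0
    · simp only [hfd, ← h0, Real.zero_rpow hr0.ne']; simp
    · simp only [hfd]; rw [Real.log_rpow h0]; ring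
  change ∑ i, f i ≤ D ^ r
  rcases (Finset.sum_nonneg fun i (_ : i ∈ Finset.univ) => hf i).eq_or_lt with h0 | hS
  · rw [← h0]; exact Real.rpow_nonneg hD.le r
  set S := ∑ i, f i with hSd
  set Φ := ∑ i, f i * log (f i) with hΦ
  set Λ : Fin (m+1) → ℝ := fun k => ∑ i, f i * log (∑ t, f (Function.update i k t)) with hΛ
  have hup : ∀ (k : Fin (m+1)) (t s : ι) (j : Fin m → ι),
      Function.update (k.insertNth t j : Fin (m+1) → ι) k s = k.insertNth s j := by
    intro k t s j
    simp
  have hone : ∀ k, (m+1) * (S * log S) - 2 * m * (S * log D) + m/(m+1) * Φ ≤ Λ k := by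
    intro k
    have h1 := bh_blei_one (fun j t => a (k.insertNth t j)) (fun j t => f (k.insertNth t j))
      (fun j t => hf _) (fun j t => hfa _) _ _ D S hD hS (bh_sum_insertNth k f).symm (h k)
    have h2 := bh_blei_two (fun j t => a (k.insertNth t j)) (fun j t => f (k.insertNth t j))
      (fun j t => hf _) (fun j t => hfa _)
    set X := ∑ i, f i * log (∑ t, a (Function.update i k t) ^ 2) with hX
    have e1 : ∑ j : Fin m → ι, ∑ t, f (k.insertNth t j) * ((m : ℝ) / (m+1) *
        log (∑ t, a (k.insertNth t j) ^ 2) + log S - (2 * m : ℝ) / (m+1) * log D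
        - log (∑ t, f (k.insertNth t j))) = (m : ℝ) / (m+1) * X + S * log S
          - (2 * m : ℝ) / (m+1) * (S * log D) - Λ k := by
      have : (m : ℝ) / (m+1) * X + S * log S
          - (2 * m : ℝ) / (m+1) * (S * log D) - Λ k = ∑ i, f i * ((m : ℝ) / (m+1) *
        log (∑ t, a (Function.update i k t) ^ 2) + log S - (2 * m : ℝ) / (m+1) * log D
        - log (∑ t, f (Function.update i k t))) := by
        simp only [hX, hΛ, hSd, Finset.mul_sum, Finset.sum_mul, ← Finset.sum_add_distrib,
          ← Finset.sum_sub_distrib]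
        refine Finset.sum_congr rfl fun i _ => ?_
        ring
      rw [this, bh_sum_insertNth k]
      simp only [hup]
    have e2 : ∑ j : Fin m → ι, ∑ t, f (k.insertNth t j) * (2 * log (a (k.insertNth t j)) +
        log (∑ t, f (k.insertNth t j)) - log (∑ t, a (k.insertNth t j) ^ 2)
        - log (f (k.insertNth t j))) = 2 / r * Φ + Λ k - X - Φ := by
      have : 2 / r * Φ + Λ k - X - Φ = ∑ i, f i * (2 * log (a i) +
        log (∑ t, f (Function.update i k t)) - log (∑ t, a (Function.update i k t) ^ 2)
        - log (f i)) := by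
        simp only [hX, hΛ, hΦ, Finset.mul_sum, ← Finset.sum_add_distrib,
          ← Finset.sum_sub_distrib]
        refine Finset.sum_congr rfl fun i _ => ?_
        rw [mul_sub, hlog]
        field_simp
      rw [this, bh_sum_insertNth k]
      simp only [hup]
    rw [e1] at h1
    rw [e2] at h2
    have h3 : 2 / r = (m+2)/(m+1) := by rw [hr]; field_simp
    rw [h3] at h2
    have h4 := mul_le_mul_of_nonneg_left h1 (by positivity : (0:ℝ) ≤ m+1)
    have h5 := mul_le_mul_of_nonneg_left h2 hm'.le
    have h6 : ((m:ℝ)+1) * ((m : ℝ) / (m+1) * X + S * log S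
          - (2 * m : ℝ) / (m+1) * (S * log D) - Λ k) + m * ((m+2)/(m+1) * Φ + Λ k - X - Φ)
        = (m+1) * (S * log S) - 2 * m * (S * log D) + m/(m+1) * Φ - Λ k := by
      field_simp; ring
    linarith
  have hhan := bh_han (m+1) f hf
  simp only [mul_sub, Finset.sum_sub_distrib] at hhan
  rw [← hΦ, ← hSd, ← Finset.sum_mul, ← hSd] at hhan
  simp only [Finset.sum_const, Finset.card_univ, Fintype.card_fin, nsmul_eq_mul] at hhan
  have hsum := Finset.sum_le_sum fun k (_ : k ∈ (Finset.univ : Finset (Fin (m+1)))) => hone k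
  simp only [Finset.sum_const, Finset.card_univ, Fintype.card_fin, nsmul_eq_mul] at hsum
  push_cast at hsum hhan
  have h7 : ((m:ℝ)+1) * ((m+1) * (S * log S) - 2 * m * (S * log D) + m/(m+1) * Φ)
      = ((m:ℝ)+1)^2 * (S * log S) - 2 * m * (m+1) * (S * log D) + m * Φ := by
    field_simp
  rw [h7] at hsum
  have h8 : (S * m) * ((m+2) * log S) ≤ (S * m) * (2 * (m+1) * log D) := by nlinarith
  have h9 := le_of_mul_le_mul_left h8 (by positivity)
  have h10 : log S ≤ r * log D := by
    rw [hr, div_mul_eq_mul_div, le_div_iff₀ (by positivity)]; linarith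
  rw [← Real.log_rpow hD] at h10
  exact (Real.log_le_log_iff hS (Real.rpow_pos_of_pos hD r)).mp h10

lemma bh_u_sums (z w v : ℂ) (h : 1 + z + z^2 + z^3 + z^4 = 0) :
    ((w + v) + (w*z + v*z^4) + (w*z^2+v*z^3) + (w*z^3+v*z^2) + (w*z^4+v*z) = 0) ∧
    ((w + v)^2 + (w*z + v*z^4)^2 + (w*z^2+v*z^3)^2 + (w*z^3+v*z^2)^2 + (w*z^4+v*z)^2
      = 10 * (w * v)) ∧
    ((w + v)^3 + (w*z + v*z^4)^3 + (w*z^2+v*z^3)^3 + (w*z^3+v*z^2)^3 + (w*z^4+v*z)^3 = 0) ∧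
    ((w + v)^4 + (w*z + v*z^4)^4 + (w*z^2+v*z^3)^4 + (w*z^3+v*z^2)^4 + (w*z^4+v*z)^4
      = 30 * (w * v)^2) := by
  refine ⟨?_, ?_, ?_, ?_⟩
  · linear_combination (w + v) * h
  · linear_combination (1*w^0*v^2*((1)*z^0+(-1)*z^1+(1)*z^2+(-1)*z^3+(1)*z^4) + 2*w^1*v^1*((-4)*z^0+(4)*z^1) + 1*w^2*v^0*((1)*z^0+(-1)*z^1+(1)*z^2+(-1)*z^3+(1)*z^4)) * h
  · linear_combination (1*w^0*v^3*((1)*z^0+(-1)*z^1+(1)*z^3+(-1)*z^4+(1)*z^5+(-1)*z^7+(1)*z^8) + 3*w^1*v^2*((1)*z^0+(-1)*z^1+(1)*z^5) + 3*w^2*v^1*((1)*z^0+(-1)*z^1+(1)*z^5) + 1*w^3*v^0*((1)*z^0+(-1)*z^1+(1)*z^3+(-1)*z^4+(1)*z^5+(-1)*z^7+(1)*z^8)) * h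
  · linear_combination (1*w^0*v^4*((1)*z^0+(-1)*z^1+(1)*z^4+(-1)*z^6+(1)*z^8+(-1)*z^11+(1)*z^12) + 4*w^1*v^3*((1)*z^0+(-1)*z^1+(1)*z^5+(-1)*z^6+(1)*z^7+(-1)*z^8+(1)*z^9) + 6*w^2*v^2*((-4)*z^0+(4)*z^1+(-4)*z^5+(4)*z^6) + 4*w^3*v^1*((1)*z^0+(-1)*z^1+(1)*z^5+(-1)*z^6+(1)*z^7+(-1)*z^8+(1)*z^9) + 1*w^4*v^0*((1)*z^0+(-1)*z^1+(1)*z^4+(-1)*z^6+(1)*z^8+(-1)*z^11+(1)*z^12)) * h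

lemma bh_exists_root : ∃ z : ℂ, 1 + z + z^2 + z^3 + z^4 = 0 ∧ ‖z‖ = 1 ∧ z ^ 5 = 1 := by
  have hp := Complex.isPrimitiveRoot_exp 5 (by norm_num)
  refine ⟨_, ?_, hp.norm'_eq_one (by norm_num), hp.pow_eq_one⟩
  have := hp.geom_sum_eq_zero (by norm_num)
  simpa [Finset.sum_range_succ] using this

/-- Moments over one fifth root of unity. -/
lemma bh_one_moment (z T b : ℂ) (h : 1 + z + z^2 + z^3 + z^4 = 0) (hz : ‖z‖ = 1)
    (h5 : z ^ 5 = 1) (X Y : ℝ) (hX : X = ‖T‖^2) (hY : Y = ‖b‖^2) :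
    (∑ s : Fin 5, (‖b * z ^ (s:ℕ) + T‖^2) = 5 * (X + Y)) ∧
    (∑ s : Fin 5, (‖b * z ^ (s:ℕ) + T‖^2)^2 = 5 * (X^2 + 4 * X * Y + Y^2)) ∧
    (∑ s : Fin 5, (‖b * z ^ (s:ℕ) + T‖^2)^3 = 5 * (X^3 + 9 * X^2 * Y + 9 * X * Y^2 + Y^3)) ∧
    (∑ s : Fin 5, (‖b * z ^ (s:ℕ) + T‖^2)^4 =
      5 * (X^4 + 16 * X^3 * Y + 36 * X^2 * Y^2 + 16 * X * Y^3 + Y^4)) := by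
  have hc : starRingEnd ℂ z = z ^ 4 := by
    have h1 : z * starRingEnd ℂ z = 1 := by
      rw [Complex.mul_conj, Complex.normSq_eq_norm_sq, hz]; simp
    have hz0 : z ≠ 0 := by rintro rfl; simp at hz
    apply mul_left_cancel₀ hz0
    rw [h1, ← h5]; ring
  set w := b * starRingEnd ℂ T with hw
  set v := starRingEnd ℂ b * T with hv
  have hXc : (X : ℂ) = T * starRingEnd ℂ T := by
    rw [Complex.mul_conj, Complex.normSq_eq_norm_sq, hX]
  have hYc : (Y : ℂ) = b * starRingEnd ℂ b := by
    rw [Complex.mul_conj, Complex.normSq_eq_norm_sq, hY]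
  have hwv : w * v = X * Y := by rw [hXc, hYc, hw, hv]; ring
  have hn : ∀ s : ℕ, ((‖b * z ^ s + T‖^2 : ℝ) : ℂ) =
      Y * (z ^ 5) ^ s + X + (w * z ^ s + v * z ^ (4 * s)) := by
    intro s
    rw [← Complex.normSq_eq_norm_sq, ← Complex.mul_conj]
    simp only [map_add, map_mul, map_pow, hc]
    rw [hXc, hYc, hw, hv]
    ring
  have h6 : z ^ 6 = z := by rw [pow_succ, h5, one_mul]
  have h8 : z ^ 8 = z^3 := by rw [show 8 = 5 + 3 by norm_num, pow_add, h5, one_mul]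
  have h12 : z ^ 12 = z^2 := by rw [show 12 = 5 + 5 + 2 by norm_num, pow_add, pow_add, h5]; ring
  have h16 : z ^ 16 = z := by
    rw [show 16 = 5 + 5 + 5 + 1 by norm_num, pow_add, pow_add, pow_add, h5]; ring
  have g0 := hn 0
  have g1 := hn 1
  have g2 := hn 2
  have g3 := hn 3
  have g4 := hn 4
  simp only [h5, one_pow, Nat.reduceMul, h8, h12, h16, mul_one, pow_one, pow_zero] at g0 g1 g2 g3 g4
  obtain ⟨u1, u2, u3, u4⟩ := bh_u_sums z w v h
  rw [hwv] at u2 u4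
  generalize w + v = U0 at *
  generalize w*z + v*z^4 = U1 at *
  generalize w*z^2 + v*z^3 = U2 at *
  generalize w*z^3 + v*z^2 = U3 at *
  generalize w*z^4 + v*z = U4 at *
  have F0 : ((0 : Fin 5) : ℕ) = 0 := rfl
  have F1 : ((1 : Fin 5) : ℕ) = 1 := rfl
  have F2 : ((2 : Fin 5) : ℕ) = 2 := rfl
  have F3 : ((3 : Fin 5) : ℕ) = 3 := rfl
  have F4 : ((4 : Fin 5) : ℕ) = 4 := rfl
  simp only [Fin.sum_univ_five, F0, F1, F2, F3, F4, pow_zero, pow_one, mul_one]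
  push_cast at g0 g1 g2 g3 g4
  refine ⟨?_, ?_, ?_, ?_⟩ <;> apply Complex.ofReal_injective <;> push_cast <;>
    simp only [g0, g1, g2, g3, g4]
  · linear_combination u1
  · linear_combination u2 + 2 * ((X:ℂ) + Y) * u1
  · linear_combination u3 + 3 * ((X:ℂ) + Y) * u2 + 3 * ((X:ℂ) + Y)^2 * u1
  · linear_combination u4 + 4 * ((X:ℂ) + Y) * u3 + 6 * ((X:ℂ) + Y)^2 * u2 + 4 * ((X:ℂ) + Y)^3 * u1

lemma bh_moments (z : ℂ) (h : 1 + z + z^2 + z^3 + z^4 = 0) (hz : ‖z‖ = 1) (h5 : z ^ 5 = 1) :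
    ∀ (N : ℕ) (v : Fin N → ℂ) (P : ℕ → ℝ), (∀ k, P k = ∑ t, (‖v t‖^2)^k) →
    (∑ ω : Fin N → Fin 5, ‖∑ t, v t * z ^ (ω t : ℕ)‖^2 = 5^N * P 1) ∧
    (∑ ω : Fin N → Fin 5, (‖∑ t, v t * z ^ (ω t : ℕ)‖^2)^2 = 5^N * (2 * P 1^2 - P 2)) ∧
    (∑ ω : Fin N → Fin 5, (‖∑ t, v t * z ^ (ω t : ℕ)‖^2)^3 =
      5^N * (6 * P 1^3 - 9 * P 1 * P 2 + 4 * P 3)) ∧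
    (∑ ω : Fin N → Fin 5, (‖∑ t, v t * z ^ (ω t : ℕ)‖^2)^4 =
      5^N * (24 * P 1^4 - 72 * P 1^2 * P 2 + 18 * P 2^2 + 64 * P 1 * P 3 - 33 * P 4)) := by
  intro N
  induction N with
  | zero =>
    intro v P hP
    simp [hP]
  | succ N ih =>
    intro v P hP
    obtain ⟨Q, hQ⟩ : ∃ Q : ℕ → ℝ, ∀ k, Q k = ∑ t : Fin N, (‖v t.succ‖^2)^k := ⟨_, fun _ => rfl⟩
    obtain ⟨i1, i2, i3, i4⟩ := ih (fun t => v t.succ) Q hQ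
    have hP' : ∀ k, P k = (‖v 0‖^2)^k + ∑ t : Fin N, (‖v t.succ‖^2)^k := by
      intro k; rw [hP, Fin.sum_univ_succ]
    simp only [hP']
    simp only [← hQ]
    simp only [bh_sum_cons, Fin.sum_univ_succ (n := N), Fin.cons_zero, Fin.cons_succ]
    have hm := fun T : ℂ => bh_one_moment z T (v 0) h hz h5 (‖T‖^2) (‖v 0‖^2) rfl rfl
    set Y := ‖v 0‖^2
    refine ⟨?_, ?_, ?_, ?_⟩ <;> rw [Finset.sum_comm]
    · simp only [(hm _).1]
      simp only [← Finset.mul_sum, Finset.sum_add_distrib, i1, Finset.sum_const, Finset.card_univ,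
        Fintype.card_fun, Fintype.card_fin, nsmul_eq_mul]
      push_cast; ring
    · simp only [(hm _).2.1]
      simp only [← Finset.mul_sum, ← Finset.sum_mul, Finset.sum_add_distrib, i1, i2,
        Finset.sum_const, Finset.card_univ, Fintype.card_fun, Fintype.card_fin, nsmul_eq_mul]
      push_cast; ring
    · simp only [(hm _).2.2.1]
      simp only [← Finset.mul_sum, ← Finset.sum_mul, Finset.sum_add_distrib, i1, i2, i3,
        Finset.sum_const, Finset.card_univ, Fintype.card_fun, Fintype.card_fin, nsmul_eq_mul]
      push_cast; ring
    · simp only [(hm _).2.2.2]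
      simp only [← Finset.mul_sum, ← Finset.sum_mul, Finset.sum_add_distrib, i1, i2, i3, i4,
        Finset.sum_const, Finset.card_univ, Fintype.card_fun, Fintype.card_fin, nsmul_eq_mul]
      push_cast; ring

lemma bh_log_four_thirds : log (4/3) ≤ 0.2885 := by
  rw [Real.log_le_iff_le_exp (by norm_num)]
  refine le_trans ?_ (Real.sum_le_exp_of_nonneg (by norm_num) 5)
  norm_num [Finset.sum_range_succ, Nat.factorial]

lemma bh_log_five : log 5 ≤ 1.6165 := by
  have h : log 5 = log (5/4) + 2 * log 2 := by
    rw [Real.log_div (by norm_num) (by norm_num), show (4:ℝ) = 2^2 by norm_num, Real.log_pow]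
    push_cast; ring
  have h1 : log (5/4) ≤ 0.224 := by
    rw [Real.log_le_iff_le_exp (by norm_num)]
    refine le_trans ?_ (Real.sum_le_exp_of_nonneg (by norm_num) 5)
    norm_num [Finset.sum_range_succ, Nat.factorial]
  have := Real.log_two_lt_d9
  rw [h]; linarith

/-- The two-point tangential cubic majorant of the logarithm. -/
lemma bh_log_le (x : ℝ) (hx : 0 < x) :
    log x ≤ -(26/25) + 77/60 * x - 7/30 * x^2 + 1/60 * x^3 := by
  set g : ℝ → ℝ := fun x => -(26/25) + 77/60 * x - 7/30 * x^2 + 1/60 * x^3 - log x with hg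
  have hd : ∀ y, 0 < y → HasDerivAt g ((y - 4/3) * (y - 3) * (y - 5) / (20 * y)) y := by
    intro y hy
    have h1 := ((((hasDerivAt_id y).const_mul (77/60:ℝ)).const_add (-(26/25):ℝ)).sub
      (((hasDerivAt_id y).pow 2).const_mul (7/30:ℝ))).add
      (((hasDerivAt_id y).pow 3).const_mul (1/60:ℝ)) |>.sub (Real.hasDerivAt_log hy.ne')
    refine h1.congr_deriv ?_
    simp only [id]
    field_simp
    ring
  have hc : ∀ s : Set ℝ, (∀ y ∈ s, 0 < y) → ContinuousOn g s := fun s hs y hy =>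
    (hd y (hs y hy)).continuousAt.continuousWithinAt
  have hanti : ∀ a b : ℝ, 0 < a → a ≤ b → (∀ y, a < y → y < b →
      (y - 4/3) * (y - 3) * (y - 5) ≤ 0) → g b ≤ g a := by
    intro a b ha hab hs
    have := antitoneOn_of_deriv_nonpos (convex_Icc a b) (f := g)
      (hc _ fun y hy => lt_of_lt_of_le ha hy.1)
      (fun y hy => by
        rw [interior_Icc] at hy
        exact (hd y (ha.trans hy.1)).differentiableAt.differentiableWithinAt)
      (fun y hy => by
        rw [interior_Icc] at hy
        rw [(hd y (ha.trans hy.1)).deriv]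
        exact div_nonpos_of_nonpos_of_nonneg (hs y hy.1 hy.2) (by linarith [ha.trans hy.1]))
    exact this (Set.left_mem_Icc.mpr hab) (Set.right_mem_Icc.mpr hab) hab
  have hmono : ∀ a b : ℝ, 0 < a → a ≤ b → (∀ y, a < y → y < b →
      0 ≤ (y - 4/3) * (y - 3) * (y - 5)) → g a ≤ g b := by
    intro a b ha hab hs
    have := monotoneOn_of_deriv_nonneg (convex_Icc a b) (f := g)
      (hc _ fun y hy => lt_of_lt_of_le ha hy.1)
      (fun y hy => by
        rw [interior_Icc] at hy
        exact (hd y (ha.trans hy.1)).differentiableAt.differentiableWithinAt)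
      (fun y hy => by
        rw [interior_Icc] at hy
        rw [(hd y (ha.trans hy.1)).deriv]
        exact div_nonneg (hs y hy.1 hy.2) (by linarith [ha.trans hy.1]))
    exact this (Set.left_mem_Icc.mpr hab) (Set.right_mem_Icc.mpr hab) hab
  have g1 : 0 ≤ g (4/3) := by
    have := bh_log_four_thirds
    simp only [hg]; norm_num at this ⊢; linarith
  have g2 : 0 ≤ g 5 := by
    have := bh_log_five
    simp only [hg]; norm_num at this ⊢; linarith
  have : 0 ≤ g x := by
    rcases le_total x (4/3) with h1 | h1
    · refine g1.trans (hanti x _ hx h1 fun y _ hy => ?_)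
      exact mul_nonpos_of_nonneg_of_nonpos (mul_nonneg_of_nonpos_of_nonpos (by linarith)
        (by linarith)) (by linarith)
    rcases le_total x 3 with h2 | h2
    · refine g1.trans (hmono _ x (by norm_num) h1 fun y hy hy' => ?_)
      exact mul_nonneg_of_nonpos_of_nonpos (mul_nonpos_of_nonneg_of_nonpos (by linarith)
        (by linarith)) (by linarith)
    rcases le_total x 5 with h3 | h3
    · refine g2.trans (hanti x _ hx h3 fun y hy hy' => ?_)
      exact mul_nonpos_of_nonneg_of_nonpos (mul_nonneg (by linarith)
        (by linarith)) (by linarith)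
    · refine g2.trans (hmono _ x (by norm_num) h3 fun y hy hy' => ?_)
      exact mul_nonneg (mul_nonneg (by linarith) (by linarith)) (by linarith)
  simp only [hg] at this
  linarith

lemma bh_pointwise (x δ : ℝ) (hx : 0 ≤ x) (hδ : 0 ≤ δ) (hδ1 : δ < 1) :
    exp (-(δ * (79/150))) * (x * (1 + δ * (79/150)) -
      δ * (-(26/25) * x + 77/60 * x^2 - 7/30 * x^3 + 1/60 * x^4)) ≤ x ^ (1 - δ) := by
  rcases hx.eq_or_lt with h | h
  · rw [← h, Real.zero_rpow (by linarith)]; simp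
  · have h1 : x ^ (1 - δ) = x * (exp (-(δ * (79/150))) * exp (-(δ * (log x - 79/150)))) := by
      rw [← Real.exp_add, Real.rpow_def_of_pos h]
      nth_rewrite 2 [← Real.exp_log h]
      rw [← Real.exp_add]; congr 1; ring
    rw [h1]
    have h2 := Real.add_one_le_exp (-(δ * (log x - 79/150)))
    have h3 := mul_le_mul_of_nonneg_left (bh_log_le x h) hδ
    have h4 : (1 + δ * (79/150)) - δ * (-(26/25) + 77/60 * x - 7/30 * x^2 + 1/60 * x^3) ≤
      exp (-(δ * (log x - 79/150))) := by linarith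
    have h5 := mul_le_mul_of_nonneg_left h4 h.le
    have h6 := mul_le_mul_of_nonneg_left h5 (Real.exp_pos (-(δ * (79/150)))).le
    refine (le_of_eq ?_).trans (h6.trans (le_of_eq ?_)) <;> ring

lemma bh_power_sums {N : ℕ} (y : Fin N → ℝ) (h1 : ∑ t, y t = 1)
    (hy : ∀ t, 0 ≤ y t) :
    -23 * (∑ t, y t^2) + 8 * (∑ t, y t^3) + 18 * (∑ t, y t^2)^2 - 33 * (∑ t, y t^4) ≤ 0 := by
  set q := ∑ t, y t^2 with hq
  have hv : 0 ≤ ∑ t, y t * (y t - q)^2 := Finset.sum_nonneg fun t _ => mul_nonneg (hy t) (sq_nonneg _)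
  have he : ∑ t, y t * (y t - q)^2 = (∑ t, y t^3) - 2 * q * (∑ t, y t^2) + q^2 * ∑ t, y t := by
    simp only [Finset.mul_sum, ← Finset.sum_add_distrib, ← Finset.sum_sub_distrib]
    exact Finset.sum_congr rfl fun t _ => by ring
  rw [he, h1, ← hq] at hv
  have hp : ∑ t, (-23 * y t^2 + 26 * y t^3 - 33 * y t^4) ≤ 0 := by
    refine Finset.sum_nonpos fun t _ => ?_
    nlinarith [sq_nonneg (y t), mul_nonneg (sq_nonneg (y t)) (sq_nonneg (33 * y t - 13))]
  simp only [Finset.sum_add_distrib, Finset.sum_sub_distrib, ← Finset.mul_sum] at hp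
  rw [← hq] at hp
  nlinarith

/-- Khinchine inequality over fifth roots of unity, normalised. -/
lemma bh_khinchine_one (z : ℂ) (h : 1 + z + z^2 + z^3 + z^4 = 0) (hz : ‖z‖ = 1) (h5 : z ^ 5 = 1)
    (N : ℕ) (v : Fin N → ℂ) (hv : ∑ t, ‖v t‖^2 = 1) (δ : ℝ) (hδ : 0 ≤ δ) (hδ1 : δ < 1) :
    exp (-(δ * (79/150))) * 5^N ≤
      ∑ ω : Fin N → Fin 5, (‖∑ t, v t * z ^ (ω t : ℕ)‖^2) ^ (1 - δ) := by
  obtain ⟨m1, m2, m3, m4⟩ := bh_moments z h hz h5 N v (fun k => ∑ t, (‖v t‖^2)^k) (fun k => rfl)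
  have hp := bh_power_sums (fun t => ‖v t‖^2) hv (fun t => sq_nonneg _)
  simp only [pow_one, hv] at m1 m2 m3 m4
  refine le_trans ?_ (Finset.sum_le_sum fun ω _ => bh_pointwise _ δ (sq_nonneg _) hδ hδ1)
  rw [← Finset.mul_sum]
  refine mul_le_mul_of_nonneg_left ?_ (Real.exp_pos _).le
  simp only [Finset.sum_sub_distrib, Finset.sum_add_distrib, ← Finset.mul_sum, ← Finset.sum_mul]
  rw [m1, m2, m3, m4]
  set q2 := ∑ t, (‖v t‖^2)^2
  set q3 := ∑ t, (‖v t‖^2)^3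
  set q4 := ∑ t, (‖v t‖^2)^4
  have : 0 ≤ (5:ℝ)^N * δ * (-(-23 * q2 + 8 * q3 + 18 * q2^2 - 33 * q4)) :=
    mul_nonneg (by positivity) (by linarith)
  nlinarith

lemma bh_khinchine (z : ℂ) (h : 1 + z + z^2 + z^3 + z^4 = 0) (hz : ‖z‖ = 1) (h5 : z ^ 5 = 1)
    (N : ℕ) (v : Fin N → ℂ) (δ : ℝ) (hδ : 0 ≤ δ) (hδ1 : δ < 1) :
    5^N * (∑ t, ‖v t‖^2) ^ (1 - δ) ≤ exp (δ * (79/150)) *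
      ∑ ω : Fin N → Fin 5, (‖∑ t, v t * z ^ (ω t : ℕ)‖^2) ^ (1 - δ) := by
  have hA : 0 ≤ ∑ t, ‖v t‖^2 := Finset.sum_nonneg fun t _ => sq_nonneg _
  rcases hA.eq_or_lt with h0 | h0
  · rw [← h0, Real.zero_rpow (by linarith), mul_zero]
    exact mul_nonneg (Real.exp_pos _).le
      (Finset.sum_nonneg fun ω _ => Real.rpow_nonneg (sq_nonneg _) _)
  · set A := ∑ t, ‖v t‖^2 with hAd
    have hs : 0 < √A := Real.sqrt_pos.mpr h0
    have hss : √A ^ 2 = A := Real.sq_sqrt hA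
    have hn : ‖((√A : ℝ) : ℂ)‖ = √A := by
      rw [Complex.norm_real, Real.norm_of_nonneg hs.le]
    have h1 := bh_khinchine_one z h hz h5 N (fun t => v t / (√A : ℝ)) (by
      simp only [norm_div, hn, div_pow, hss, ← Finset.sum_div]
      exact div_self h0.ne') δ hδ hδ1
    have h2 : ∀ ω : Fin N → Fin 5, (‖∑ t, v t / ((√A : ℝ) : ℂ) * z ^ (ω t : ℕ)‖^2) ^ (1 - δ) =
        (‖∑ t, v t * z ^ (ω t : ℕ)‖^2) ^ (1 - δ) / A ^ (1 - δ) := by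
      intro ω
      rw [← Real.div_rpow (sq_nonneg _) hA]
      congr 1
      simp only [div_mul_eq_mul_div, ← Finset.sum_div, norm_div, hn, div_pow, hss]
    simp only [h2, ← Finset.sum_div] at h1
    rw [le_div_iff₀ (Real.rpow_pos_of_pos h0 _)] at h1
    have h3 := mul_le_mul_of_nonneg_left h1 (Real.exp_pos (δ * (79/150))).le
    refine (le_of_eq ?_).trans h3
    rw [mul_assoc, ← mul_assoc (exp _), ← Real.exp_add]
    simp

/-- Multiple-sum form of the Bohnenblust and Hille inequality with explicit constants. -/
lemma bh_main (N : ℕ) (m : ℕ) (hm : 1 ≤ m) : ∀ (a : (Fin m → Fin N) → ℂ) (C : ℝ), 0 < C →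
    (∀ z : Fin m → Fin N → ℂ, (∀ k t, ‖z k t‖ ≤ 1) → ‖∑ i, a i * ∏ k, z k (i k)‖ ≤ C) →
    ∑ i, ‖a i‖ ^ ((2 * m : ℝ) / (m+1)) ≤
      (exp (79/300 * ∑ l ∈ Finset.Ico 1 m, (1:ℝ)/l) * C) ^ ((2 * m : ℝ) / (m+1)) := by
  induction m, hm using Nat.le_induction with
  | base =>
    intro a C hC h
    have := h (fun _ t => starRingEnd ℂ (a fun _ => t) / ‖a fun _ => t‖) (by
      intro k t
      rw [norm_div, RCLike.norm_conj, Complex.norm_real, norm_norm]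
      exact div_self_le_one _)
    have he : ∀ i : Fin 1 → Fin N, (fun _ => i 0) = i := by
      intro i; ext k; rw [Subsingleton.elim k 0]
    have h2 : ∑ i, a i * ∏ k : Fin 1, (starRingEnd ℂ (a fun _ => i k) / ‖a fun _ => i k‖) =
        ((∑ i, ‖a i‖ : ℝ) : ℂ) := by
      push_cast
      refine Finset.sum_congr rfl fun i _ => ?_
      rw [Fin.prod_univ_one, he, mul_div_assoc', Complex.mul_conj, Complex.normSq_eq_norm_sq]
      by_cases h0 : ‖a i‖ = 0
      · simp [h0]
      · have : ((‖a i‖ : ℝ) : ℂ) ≠ 0 := by exact_mod_cast h0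
        push_cast
        field_simp
    rw [h2, Complex.norm_real] at this
    have h3 := (le_abs_self _).trans this
    norm_num
    exact h3
  | succ m hm ih =>
    intro a C hC h
    obtain ⟨z, hz, hz1, hz5⟩ := bh_exists_root
    have hm' : (0:ℝ) < m := by exact_mod_cast hm
    set B := exp (79/300 * ∑ l ∈ Finset.Ico 1 m, (1:ℝ)/l) with hB
    have hB0 : 0 < B := Real.exp_pos _
    have hBs : exp (79/300 * ∑ l ∈ Finset.Ico 1 (m+1), (1:ℝ)/l) = exp (79/300 * (1/m)) * B := by
      rw [Finset.sum_Ico_succ_top hm, hB, ← Real.exp_add]; congr 1; ring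
    rw [hBs]
    have hexp : (2 * ((m+1 : ℕ) : ℝ)) / (((m+1 : ℕ) : ℝ) + 1) = (2 * (m+1) : ℝ) / (m+2) := by
      push_cast; ring
    rw [hexp]
    refine bh_blei m hm (fun i => ‖a i‖) (fun i => norm_nonneg _) _ (by positivity) fun k => ?_
    have hδ : (m:ℝ) / (m+1) = 1 - 1/(m+1) := by field_simp; ring
    have hkh : ∀ j : Fin m → Fin N, 5^N * (∑ t, ‖a (k.insertNth t j)‖^2) ^ ((m:ℝ)/(m+1)) ≤
        exp (1/(m+1) * (79/150)) * ∑ ω : Fin N → Fin 5,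
          ‖∑ t, a (k.insertNth t j) * z ^ (ω t : ℕ)‖ ^ ((2 * m : ℝ) / (m+1)) := by
      intro j
      have := bh_khinchine z hz hz1 hz5 N (fun t => a (k.insertNth t j)) (1/(m+1)) (by positivity)
        (by rw [div_lt_one (by positivity)]; linarith)
      rw [← hδ] at this
      refine this.trans (le_of_eq ?_)
      congr 1
      refine Finset.sum_congr rfl fun ω _ => ?_
      rw [← Real.rpow_natCast, ← Real.rpow_mul (norm_nonneg _)]
      congr 1
      push_cast; ring
    have hih : ∀ ω : Fin N → Fin 5, ∑ j : Fin m → Fin N,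
        ‖∑ t, a (k.insertNth t j) * z ^ (ω t : ℕ)‖ ^ ((2 * m : ℝ) / (m+1)) ≤
          (B * C) ^ ((2 * m : ℝ) / (m+1)) := by
      intro ω
      refine ih (fun j => ∑ t, a (k.insertNth t j) * z ^ (ω t : ℕ)) C hC fun y hy => ?_
      have h1 := h (k.insertNth (fun t => z ^ (ω t : ℕ)) y) (by
        intro l t
        refine Fin.succAboveCases k ?_ (fun l => ?_) l
        · simp [hz1]
        · simpa using hy l t)
      refine (le_of_eq ?_).trans h1
      congr 1
      rw [← (Fin.insertNthEquiv (fun _ => Fin N) k).sum_comp, Fintype.sum_prod_type,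
        Finset.sum_comm]
      refine Finset.sum_congr rfl fun j _ => ?_
      rw [Finset.sum_mul]
      refine Finset.sum_congr rfl fun t _ => ?_
      rw [Fin.prod_univ_succAbove _ k]
      simp [Fin.insertNthEquiv, mul_assoc]
    have h5 : (0:ℝ) < 5^N := by positivity
    refine le_of_mul_le_mul_left ?_ h5
    rw [Finset.mul_sum]
    refine (Finset.sum_le_sum fun j _ => hkh j).trans ?_
    rw [← Finset.mul_sum, Finset.sum_comm]
    refine (mul_le_mul_of_nonneg_left (Finset.sum_le_sum fun ω _ => hih ω)
      (Real.exp_pos _).le).trans (le_of_eq ?_)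
    rw [Finset.sum_const, mul_assoc, Real.mul_rpow (Real.exp_pos _).le (by positivity : 0 ≤ B * C),
      ← Real.exp_mul]
    have : (79/300 * (1/m) : ℝ) * ((2 * m : ℝ) / (m+1)) = 1/(m+1) * (79/150) := by
      field_simp; ring
    rw [this]
    simp
    ring

lemma bh_numeric (n : ℕ) (hn : 65 ≤ n) :
    exp (79/300 * ∑ l ∈ Finset.Ico 1 n, (1:ℝ)/l) ≤
      0.99632125476 * ((n : ℝ) - 1) ^ (0.304975 : ℝ) := by
  have hpos : ∀ n : ℕ, 65 ≤ n → (64:ℝ) ≤ (n:ℝ) - 1 := by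
    intro n hn
    have : (65:ℝ) ≤ n := by exact_mod_cast hn
    linarith
  have key : 79/300 * ∑ l ∈ Finset.Ico 1 n, (1:ℝ)/l ≤ -0.0037 + 0.304975 * log ((n:ℝ) - 1) := by
    induction n, hn using Nat.le_induction with
    | base =>
      have h1 : ∑ l ∈ Finset.Ico (1:ℕ) 65, (1:ℝ)/(l:ℝ) ≤ 4.744 := by
        norm_num [Finset.sum_Ico_succ_top]
      have h2 : log (((65:ℕ):ℝ) - 1) = 6 * log 2 := by
        rw [show (((65:ℕ):ℝ) - 1) = 2^6 by norm_num, Real.log_pow]; norm_num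
      rw [h2]
      have := Real.log_two_gt_d9
      linarith
    | succ n hn ih =>
      rw [Finset.sum_Ico_succ_top (by omega)]
      have h0 := hpos n hn
      have hn0 : (0:ℝ) < n := by linarith
      have h1 := Real.log_le_sub_one_of_pos (x := ((n:ℝ) - 1) / n) (div_pos (by linarith) hn0)
      rw [Real.log_div (by linarith) hn0.ne'] at h1
      have h2 : ((n:ℝ) - 1) / n = 1 - 1/n := by field_simp
      rw [h2] at h1
      have h3 : (0:ℝ) < 1/n := by positivity
      have h4 : ((n+1:ℕ):ℝ) - 1 = n := by push_cast; ring
      rw [h4]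
      linarith
  have h0 := hpos n hn
  have h1 : (0:ℝ) < (n:ℝ) - 1 := by linarith
  have h2 : (-0.0037:ℝ) ≤ log 0.99632125476 := by
    have := Real.one_sub_inv_le_log_of_pos (x := (0.99632125476:ℝ)) (by norm_num)
    refine le_trans ?_ this
    norm_num
  rw [← Real.exp_log (by norm_num : (0:ℝ) < 0.99632125476), Real.rpow_def_of_pos h1,
    ← Real.exp_add]
  apply Real.exp_le_exp.mpr
  linarith

theorem stmt12 (n : ℕ) (hn : 2 ^ 6 < n) (N : ℕ) (hN : 0 < N)
    (U : ContinuousMultilinearMap ℂ (fun _ : Fin n => (Fin N → ℂ)) ℂ) :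
    BHcomplex n N U ≤ 0.99632125476 * ((n : ℝ) - 1) ^ (0.304975 : ℝ) * ‖U‖ := by
  have hn' : 65 ≤ n := by norm_num at hn; omega
  have hn0 : (0:ℝ) < n := by
    have : (65:ℝ) ≤ n := by exact_mod_cast hn'
    linarith
  have hr0 : 0 < (2 * n : ℝ) / (n + 1) := by positivity
  have hr1 : 0 < (n + 1 : ℝ) / (2 * n) := by positivity
  have hinv : (2 * n : ℝ) / (n + 1) * ((n + 1 : ℝ) / (2 * n)) = 1 := by field_simp
  unfold BHcomplex
  rcases (norm_nonneg U).eq_or_lt with h0 | h0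
  · have : U = 0 := norm_eq_zero.mp h0.symm
    subst this
    simp [Real.zero_rpow hr0.ne', Real.zero_rpow hr1.ne']
  · set B := exp (79/300 * ∑ l ∈ Finset.Ico 1 n, (1:ℝ)/l) with hB
    have hB0 : 0 < B := Real.exp_pos _
    have h1 := bh_main N n (by omega) (fun i => U (fun k => Pi.single (i k) (1 : ℂ))) ‖U‖ h0 (by
      intro z hz
      have e : U z = ∑ i : Fin n → Fin N,
          U (fun k => Pi.single (i k) (1 : ℂ)) * ∏ k, z k (i k) := by
        have e1 : z = fun k => ∑ t, z k t • (Pi.single t (1:ℂ) : Fin N → ℂ) := by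
          funext k
          exact pi_eq_sum_univ' (z k)
        conv_lhs => rw [e1]
        rw [ContinuousMultilinearMap.map_sum]
        refine Finset.sum_congr rfl fun i _ => ?_
        rw [ContinuousMultilinearMap.map_smul_univ, smul_eq_mul, mul_comm]
      rw [← e]
      refine (U.le_opNorm z).trans ?_
      refine mul_le_of_le_one_right h0.le ?_
      refine Finset.prod_le_one (fun k _ => norm_nonneg _) fun k _ => ?_
      exact (pi_norm_le_iff_of_nonneg zero_le_one).mpr (hz k))
    have h2 := Real.rpow_le_rpow (Finset.sum_nonneg fun i _ => Real.rpow_nonneg (norm_nonneg _) _)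
      h1 hr1.le
    rw [← Real.rpow_mul (by positivity), hinv, Real.rpow_one] at h2
    exact h2.trans (mul_le_mul_of_nonneg_right (bh_numeric n hn') h0.le)
end

section
/- For every integer n > 2^14 = 16384, every positive integer N, and every n-linear form U : (ℂ^N)^n → ℂ, one has (∑_{i₁,…,iₙ=1}^N |U(e_{i₁},…,e_{iₙ})|^{2n/(n+1)})^{(n+1)/(2n)} ≤ 0.99137409768 · (n-1)^{0.304975} · ‖U‖. -/
open Real

/-- weighted Hölder inequality for finite sums of products -/
theorem bh_holder {ι α : Type*} [Fintype ι] [Fintype α] (f : ι → α → ℝ) (hf : ∀ i x, 0 ≤ f i x)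
    (w : ι → ℝ) (hw : ∀ i, 0 < w i) (hw1 : ∑ i, w i = 1) :
    ∑ x, ∏ i, f i x ^ w i ≤ ∏ i, (∑ x, f i x) ^ w i := by
  have hS : ∀ i, 0 ≤ ∑ x, f i x := fun i => Finset.sum_nonneg fun x _ => hf i x
  by_cases h0 : ∃ i, ∑ x, f i x = 0
  · obtain ⟨i, hi⟩ := h0
    have hz : ∀ x, f i x = 0 := fun x =>
      (Finset.sum_eq_zero_iff_of_nonneg (fun x _ => hf i x)).1 hi x (Finset.mem_univ x)
    have : ∑ x, ∏ i, f i x ^ w i = 0 := by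
      refine Finset.sum_eq_zero fun x _ => Finset.prod_eq_zero (Finset.mem_univ i) ?_
      rw [hz x, Real.zero_rpow (hw i).ne']
    rw [this]
    exact Finset.prod_nonneg fun i _ => Real.rpow_nonneg (hS i) _
  · push Not at h0
    have hpos : ∀ i, 0 < ∑ x, f i x := fun i => lt_of_le_of_ne (hS i) (h0 i).symm
    have hP : 0 < ∏ i, (∑ x, f i x) ^ w i :=
      Finset.prod_pos fun i _ => Real.rpow_pos_of_pos (hpos i) _
    rw [← div_le_one hP, Finset.sum_div]
    calc ∑ x, (∏ i, f i x ^ w i) / ∏ i, (∑ x, f i x) ^ w i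
        = ∑ x, ∏ i, (f i x / ∑ x, f i x) ^ w i := by
          refine Finset.sum_congr rfl fun x _ => ?_
          rw [← Finset.prod_div_distrib]
          refine Finset.prod_congr rfl fun i _ => ?_
          rw [Real.div_rpow (hf i x) (hS i)]
      _ ≤ ∑ x, ∑ i, w i * (f i x / ∑ x, f i x) := by
          refine Finset.sum_le_sum fun x _ => ?_
          exact Real.geom_mean_le_arith_mean_weighted _ w _ (fun i _ => (hw i).le) hw1
            (fun i _ => div_nonneg (hf i x) (hS i))
      _ = ∑ i, w i := by
          rw [Finset.sum_comm]
          refine Finset.sum_congr rfl fun i _ => ?_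
          rw [← Finset.mul_sum, ← Finset.sum_div, div_self (h0 i), mul_one]
      _ = 1 := hw1

theorem bh_sum_cons_s13 {A : Type*} [Fintype A] {M : Type*} [AddCommMonoid M] (m : ℕ)
    (F : (Fin (m + 1) → A) → M) :
    ∑ x, F x = ∑ a, ∑ y : Fin m → A, F (Fin.cons a y) := by
  rw [← (Fin.consEquiv (fun _ : Fin (m + 1) => A)).sum_comp, Fintype.sum_prod_type]
  rfl

theorem bh_sum_insertNth_s13 {A : Type*} [Fintype A] {M : Type*} [AddCommMonoid M] (m : ℕ)
    (k : Fin (m + 1)) (F : (Fin (m + 1) → A) → M) :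
    ∑ x, F x = ∑ y : Fin m → A, ∑ a, F (Fin.insertNth k a y) := by
  rw [← (Fin.insertNthEquiv (fun _ : Fin (m + 1) => A) k).sum_comp, Fintype.sum_prod_type,
    Finset.sum_comm]
  rfl

/-- discrete Loomis-Whitney inequality -/
theorem bh_LW {A : Type*} [Fintype A] (m : ℕ) (hm : 1 ≤ m)
    (h : Fin (m + 1) → (Fin m → A) → ℝ) (hh : ∀ k y, 0 ≤ h k y) :
    ∑ x : Fin (m + 1) → A, ∏ k, h k (Fin.removeNth k x) ^ (1 / (m : ℝ)) ≤
      ∏ k, (∑ y, h k y) ^ (1 / (m : ℝ)) := by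
  induction m, hm using Nat.le_induction with
  | base =>
    have p2 : ∀ F : Fin (1 + 1) → ℝ, ∏ k, F k = F 0 * F 1 := fun F => Fin.prod_univ_two F
    simp only [Nat.cast_one, div_one, Real.rpow_one, p2]
    rw [bh_sum_cons_s13]
    have e1 : ∀ (a : A) (y : Fin 1 → A), Fin.removeNth 0 (Fin.cons a y : Fin 2 → A) = y := by
      intro a y; ext i; fin_cases i; rfl
    have e2 : ∀ (a : A) (y : Fin 1 → A), Fin.removeNth 1 (Fin.cons a y : Fin 2 → A) = fun _ => a := by
      intro a y; ext i; fin_cases i; rfl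
    have : ∀ F : (Fin 1 → A) → ℝ, ∑ y, F y = ∑ a, F (fun _ => a) := by
      intro F
      rw [← (Equiv.funUnique (Fin 1) A).symm.sum_comp]; rfl
    rw [this (h 1), mul_comm, Finset.sum_mul_sum]
    refine le_of_eq (Finset.sum_congr rfl fun a _ => Finset.sum_congr rfl fun y _ => ?_)
    rw [e1, e2, mul_comm]
  | succ m hm ih =>
    have hm0 : (0 : ℝ) < m := by exact_mod_cast hm
    have hm1 : (0 : ℝ) < (m : ℝ) + 1 := by positivity
    push_cast
    rw [bh_sum_cons_s13]
    have e1 : ∀ (a : A) (y : Fin (m + 1) → A),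
        Fin.removeNth 0 (Fin.cons a y : Fin (m + 2) → A) = y := by
      intro a y; simp
    have e2 : ∀ (a : A) (y : Fin (m + 1) → A) (k : Fin (m + 1)),
        Fin.removeNth k.succ (Fin.cons a y : Fin (m + 2) → A) = Fin.cons a (Fin.removeNth k y) := by
      intro a y k
      exact Fin.cons_comp_succ_succAbove _ _ _
    have step : ∀ a : A, ∑ y : Fin (m + 1) → A,
        ∏ k, h k (Fin.removeNth k (Fin.cons a y : Fin (m + 2) → A)) ^ (1 / ((m : ℝ) + 1)) ≤
        (∑ y, h 0 y) ^ (1 / ((m : ℝ) + 1)) *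
          ∏ k : Fin (m + 1), (∑ z, h k.succ (Fin.cons a z)) ^ (1 / ((m : ℝ) + 1)) := by
      intro a
      have H := bh_holder (ι := Fin 2) (α := Fin (m + 1) → A)
        ![fun y => h 0 y, fun y => ∏ k : Fin (m + 1), h k.succ (Fin.cons a (Fin.removeNth k y)) ^ (1 / (m : ℝ))]
        (by
          intro i x
          fin_cases i
          · exact hh _ _
          · exact Finset.prod_nonneg (s := Finset.univ)
              (f := fun k : Fin (m + 1) => h k.succ (Fin.cons a (Fin.removeNth k x)) ^ (1 / (m : ℝ)))
              fun k _ => Real.rpow_nonneg (hh _ _) _)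
        ![1 / ((m : ℝ) + 1), m / ((m : ℝ) + 1)]
        (by intro i; fin_cases i <;> simp <;> positivity)
        (by simp [Fin.sum_univ_two]; field_simp; ring)
      simp only [Fin.prod_univ_two, Matrix.cons_val_zero, Matrix.cons_val_one] at H
      have key : ∀ t : ℝ, 0 ≤ t → (t ^ (1 / (m : ℝ))) ^ ((m : ℝ) / ((m : ℝ) + 1)) = t ^ (1 / ((m : ℝ) + 1)) := by
        intro t ht
        rw [← Real.rpow_mul ht]; congr 1; field_simp
      calc _ = ∑ y : Fin (m + 1) → A, h 0 y ^ (1 / ((m : ℝ) + 1)) *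
            (∏ k : Fin (m + 1), h k.succ (Fin.cons a (Fin.removeNth k y)) ^ (1 / (m : ℝ))) ^ ((m : ℝ) / ((m : ℝ) + 1)) := by
            refine Finset.sum_congr rfl fun y _ => ?_
            rw [Fin.prod_univ_succ, e1]
            congr 1
            rw [← Real.finsetProd_rpow _ _ (fun k _ => Real.rpow_nonneg (hh _ _) _)]
            refine Finset.prod_congr rfl fun k _ => ?_
            rw [e2, key _ (hh _ _)]
        _ ≤ _ := H
        _ ≤ (∑ y, h 0 y) ^ (1 / ((m : ℝ) + 1)) *
            (∏ k : Fin (m + 1), (∑ z, h k.succ (Fin.cons a z)) ^ (1 / (m : ℝ))) ^ ((m : ℝ) / ((m : ℝ) + 1)) := by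
            refine mul_le_mul_of_nonneg_left ?_ (Real.rpow_nonneg (Finset.sum_nonneg fun _ _ => hh _ _) _)
            refine Real.rpow_le_rpow (Finset.sum_nonneg fun _ _ => Finset.prod_nonneg fun k _ => Real.rpow_nonneg (hh _ _) _) ?_ (by positivity)
            exact ih (fun k z => h k.succ (Fin.cons a z)) (fun k z => hh _ _)
        _ = _ := by
            congr 1
            rw [← Real.finsetProd_rpow _ _ (fun k _ => Real.rpow_nonneg (Finset.sum_nonneg fun _ _ => hh _ _) _)]
            refine Finset.prod_congr rfl fun k _ => ?_
            rw [key _ (Finset.sum_nonneg fun _ _ => hh _ _)]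
    refine (Finset.sum_le_sum fun a _ => step a).trans ?_
    rw [← Finset.mul_sum, Fin.prod_univ_succ]
    refine mul_le_mul_of_nonneg_left ?_ (Real.rpow_nonneg (Finset.sum_nonneg fun _ _ => hh _ _) _)
    refine (bh_holder (fun (k : Fin (m + 1)) a => ∑ z, h k.succ (Fin.cons a z))
      (fun k a => Finset.sum_nonneg fun _ _ => hh _ _) (fun _ => 1 / ((m : ℝ) + 1))
      (fun _ => by positivity) (by simp; field_simp)).trans ?_
    refine le_of_eq (Finset.prod_congr rfl fun k _ => ?_)
    rw [bh_sum_cons_s13]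

/-- Blei-type mixed norm inequality -/
theorem bh_blei_s13 {A : Type*} [Fintype A] (m : ℕ) (a : (Fin (m + 2) → A) → ℝ) (ha : ∀ x, 0 ≤ a x)
    (B : ℝ) (hB : ∀ k : Fin (m + 2), ∑ y : Fin (m + 1) → A,
      (∑ j, a (Fin.insertNth k j y) ^ 2) ^ (((m : ℝ) + 1) / (m + 2)) ≤ B) :
    ∑ x, a x ^ (2 * ((m : ℝ) + 2) / (m + 3)) ≤ B ^ (((m : ℝ) + 2) ^ 2 / ((m + 1) * (m + 3))) := by
  set S : Fin (m + 2) → (Fin (m + 1) → A) → ℝ := fun k y => ∑ j, a (Fin.insertNth k j y) ^ 2 with hS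
  have hS0 : ∀ k y, 0 ≤ S k y := fun k y => Finset.sum_nonneg fun _ _ => sq_nonneg _
  have hB0 : 0 ≤ B := (Finset.sum_nonneg fun y _ => Real.rpow_nonneg (hS0 0 y) _).trans (hB 0)
  have haS : ∀ k x, a x ^ 2 ≤ S k (Fin.removeNth k x) := by
    intro k x
    have := Finset.single_le_sum (f := fun j => a (Fin.insertNth k j (Fin.removeNth k x)) ^ 2)
      (fun _ _ => sq_nonneg _) (Finset.mem_univ (x k))
    simpa [hS] using this
  set f : Option (Fin (m + 2)) → (Fin (m + 2) → A) → ℝ := fun o x => o.elim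
    (∏ k, S k (Fin.removeNth k x) ^ (1 / ((m : ℝ) + 2)))
    (fun k => a x ^ 2 * S k (Fin.removeNth k x) ^ (-(1 / ((m : ℝ) + 2)))) with hfdef
  have hf : ∀ o x, 0 ≤ f o x := by
    rintro (_ | k) x
    · exact Finset.prod_nonneg fun k _ => Real.rpow_nonneg (hS0 _ _) _
    · exact mul_nonneg (sq_nonneg _) (Real.rpow_nonneg (hS0 _ _) _)
  have H := bh_holder f hf (fun _ => 1 / ((m : ℝ) + 3)) (fun _ => by positivity)
    (by simp; field_simp; ring)
  have hpt : ∀ x, a x ^ (2 * ((m : ℝ) + 2) / (m + 3)) ≤ ∏ o, f o x ^ (1 / ((m : ℝ) + 3)) := by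
    intro x
    rcases (ha x).eq_or_lt with h0 | h0
    · rw [← h0, Real.zero_rpow (by positivity)]
      exact Finset.prod_nonneg fun o _ => Real.rpow_nonneg (hf o x) _
    · have hSp : ∀ k, 0 < S k (Fin.removeNth k x) := fun k => lt_of_lt_of_le (by positivity) (haS k x)
      rw [Real.finsetProd_rpow _ _ (fun o _ => hf o x)]
      have : ∏ o, f o x = a x ^ (2 * ((m : ℝ) + 2)) := by
        rw [Fintype.prod_option]
        simp only [hfdef, Option.elim]
        rw [← Finset.prod_mul_distrib]
        have : ∀ k, S k (Fin.removeNth k x) ^ (1 / ((m : ℝ) + 2)) *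
            (a x ^ 2 * S k (Fin.removeNth k x) ^ (-(1 / ((m : ℝ) + 2)))) = a x ^ 2 := by
          intro k
          rw [mul_left_comm, ← Real.rpow_add (hSp k)]; simp
        simp only [this]
        simp only [Finset.prod_const, Finset.card_univ, Fintype.card_fin]
        rw [← pow_mul, ← Real.rpow_natCast]; push_cast; rfl
      rw [this, ← Real.rpow_mul h0.le]
      apply le_of_eq; congr 1; ring
  refine (Finset.sum_le_sum fun x _ => hpt x).trans (H.trans ?_)
  have hnone : ∑ x, f none x ≤ ∏ k : Fin (m + 2), B ^ (1 / ((m : ℝ) + 1)) := by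
    have := bh_LW (m + 1) (by omega) (fun k y => S k y ^ (((m : ℝ) + 1) / (m + 2)))
      (fun k y => Real.rpow_nonneg (hS0 k y) _)
    push_cast at this
    refine le_trans (le_of_eq ?_) (this.trans ?_)
    · refine Finset.sum_congr rfl fun x _ => ?_
      refine Finset.prod_congr rfl fun k _ => ?_
      rw [← Real.rpow_mul (hS0 _ _)]; congr 1; field_simp
    · refine Finset.prod_le_prod (fun k _ => Real.rpow_nonneg (Finset.sum_nonneg fun y _ => Real.rpow_nonneg (hS0 k y) _) _) fun k _ => ?_
      exact Real.rpow_le_rpow (Finset.sum_nonneg fun y _ => Real.rpow_nonneg (hS0 k y) _) (hB k) (by positivity)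
  have hsome : ∀ k, ∑ x, f (some k) x ≤ B := by
    intro k
    refine le_trans (le_of_eq ?_) (hB k)
    rw [bh_sum_insertNth_s13 _ k]
    refine Finset.sum_congr rfl fun y _ => ?_
    simp only [hfdef, Option.elim, Fin.removeNth_insertNth]
    rw [← Finset.sum_mul]
    change S k y * _ = S k y ^ _
    rcases (hS0 k y).eq_or_lt with h0 | h0
    · have : ((m : ℝ) + 1) / (m + 2) ≠ 0 := by positivity
      rw [← h0, Real.zero_rpow this]; simp
    · nth_rewrite 1 [← Real.rpow_one (S k y)]
      rw [← Real.rpow_add h0]; congr 1; field_simp; ring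
  rw [Fintype.prod_option]
  have hns : ∀ o, 0 ≤ ∑ x, f o x := fun o => Finset.sum_nonneg fun x _ => hf o x
  calc _ ≤ (∏ k : Fin (m + 2), B ^ (1 / ((m : ℝ) + 1))) ^ (1 / ((m : ℝ) + 3)) *
        ∏ k : Fin (m + 2), B ^ (1 / ((m : ℝ) + 3)) := by
        refine mul_le_mul (Real.rpow_le_rpow (hns _) hnone (by positivity)) ?_
          (Finset.prod_nonneg fun k _ => Real.rpow_nonneg (hns _) _) (by positivity)
        exact Finset.prod_le_prod (fun k _ => Real.rpow_nonneg (hns _) _) fun k _ =>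
          Real.rpow_le_rpow (hns _) (hsome k) (by positivity)
    _ = _ := by
        simp only [Finset.prod_const, Finset.card_univ, Fintype.card_fin]
        rw [← Real.rpow_natCast, ← Real.rpow_natCast, ← Real.rpow_mul hB0, ← Real.rpow_mul hB0,
          ← Real.rpow_mul hB0, ← Real.rpow_add_of_nonneg hB0 (by positivity) (by positivity)]
        congr 1; push_cast; field_simp; ring

/-- the polynomial majorant of the logarithm -/
noncomputable def bhQ (x : ℝ) : ℝ := -1.32 + 155 / 92 * x - 73 / 184 * x ^ 2 + 5 / 138 * x ^ 3

theorem bh_log_le_s13 (x : ℝ) (hx : 0 < x) : Real.log x ≤ bhQ x := by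
  set g : ℝ → ℝ := fun x => bhQ x - Real.log x with hg
  have hd : ∀ x : ℝ, 0 < x → HasDerivAt g (5 / 46 * (x - 1) * (x - 2.3) * (x - 4) / x) x := by
    intro x hx
    have h1 : HasDerivAt bhQ (155 / 92 * 1 - 73 / 184 * (2 * x) + 5 / 138 * (3 * x ^ 2)) x := by
      unfold bhQ
      have e1 := ((hasDerivAt_id x).const_mul (155 / 92 : ℝ)).const_add (-1.32 : ℝ)
      have e2 := (hasDerivAt_pow 2 x).const_mul (73 / 184 : ℝ)
      have e3 := (hasDerivAt_pow 3 x).const_mul (5 / 138 : ℝ)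
      exact ((e1.sub e2).add e3).congr_deriv (by norm_num)
    refine (h1.sub (Real.hasDerivAt_log hx.ne')).congr_deriv ?_
    field_simp
    ring
  have hc : ∀ s : Set ℝ, (∀ x ∈ s, 0 < x) → ContinuousOn g s := fun s hs x hxs =>
    (hd x (hs x hxs)).continuousAt.continuousWithinAt
  have g1 : 0 ≤ g 1 := by simp only [hg, bhQ, Real.log_one]; norm_num
  have g4 : 0 ≤ g 4 := by
    have : Real.log 4 = 2 * Real.log 2 := by
      rw [show (4 : ℝ) = 2 ^ 2 by norm_num, Real.log_pow]; norm_num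
    simp only [hg, bhQ, this]
    have := Real.log_two_lt_d9
    linarith
  have hanti : ∀ u v : ℝ, 0 < u → u ≤ v → (∀ y ∈ Set.Ioo u v, (y - 1) * (y - 2.3) * (y - 4) ≤ 0) → g v ≤ g u := by
    intro u v hu huv hy
    have : AntitoneOn g (Set.Icc u v) := by
      apply antitoneOn_of_deriv_nonpos (convex_Icc u v) (hc _ fun x hx => hu.trans_le hx.1)
      · intro x hx
        rw [interior_Icc] at hx
        exact (hd x (hu.trans hx.1)).differentiableAt.differentiableWithinAt
      · intro x hx
        rw [interior_Icc] at hx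
        rw [(hd x (hu.trans hx.1)).deriv]
        have := hy x hx
        exact div_nonpos_of_nonpos_of_nonneg (by nlinarith) (hu.trans hx.1).le
    exact this ⟨le_refl _, huv⟩ ⟨huv, le_refl _⟩ huv
  have hmono : ∀ u v : ℝ, 0 < u → u ≤ v → (∀ y ∈ Set.Ioo u v, 0 ≤ (y - 1) * (y - 2.3) * (y - 4)) → g u ≤ g v := by
    intro u v hu huv hy
    have : MonotoneOn g (Set.Icc u v) := by
      apply monotoneOn_of_deriv_nonneg (convex_Icc u v) (hc _ fun x hx => hu.trans_le hx.1)
      · intro x hx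
        rw [interior_Icc] at hx
        exact (hd x (hu.trans hx.1)).differentiableAt.differentiableWithinAt
      · intro x hx
        rw [interior_Icc] at hx
        rw [(hd x (hu.trans hx.1)).deriv]
        have := hy x hx
        exact div_nonneg (by nlinarith) (hu.trans hx.1).le
    exact this ⟨le_refl _, huv⟩ ⟨huv, le_refl _⟩ huv
  suffices 0 ≤ g x by simpa [hg] using this
  rcases le_total x 1 with h | h
  · refine g1.trans (hanti x 1 hx h fun y hy => ?_)
    have h1 : y - 1 ≤ 0 := by linarith [hy.2]
    have h2 : y - 2.3 ≤ 0 := by linarith [hy.2]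
    have h3 : y - 4 ≤ 0 := by linarith [hy.2]
    exact mul_nonpos_of_nonneg_of_nonpos (mul_nonneg_of_nonpos_of_nonpos h1 h2) h3
  rcases le_total x 2.3 with h' | h'
  · refine g1.trans (hmono 1 x one_pos h fun y hy => ?_)
    have h1 : 0 ≤ y - 1 := by linarith [hy.1]
    have h2 : y - 2.3 ≤ 0 := by linarith [hy.2]
    have h3 : y - 4 ≤ 0 := by linarith [hy.2]
    exact mul_nonneg_of_nonpos_of_nonpos (mul_nonpos_of_nonneg_of_nonpos h1 h2) h3
  rcases le_total x 4 with hd4 | hd4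
  · refine g4.trans (hanti x 4 hx hd4 fun y hy => ?_)
    have h1 : 0 ≤ y - 1 := by linarith [hy.1]
    have h2 : 0 ≤ y - 2.3 := by linarith [hy.1]
    have h3 : y - 4 ≤ 0 := by linarith [hy.2]
    exact mul_nonpos_of_nonneg_of_nonpos (mul_nonneg h1 h2) h3
  · refine g4.trans (hmono 4 x (by norm_num) hd4 fun y hy => ?_)
    have h1 : 0 ≤ y - 1 := by linarith [hy.1]
    have h2 : 0 ≤ y - 2.3 := by linarith [hy.1]
    have h3 : 0 ≤ y - 4 := by linarith [hy.1]
    exact mul_nonneg (mul_nonneg h1 h2) h3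

theorem bh_rpow_ge (x s : ℝ) (hx : 0 ≤ x) (hs : 0 ≤ s) (hs1 : s < 1) :
    Real.exp (-(s * 0.54)) * (x - s * (x * bhQ x - 0.54 * x)) ≤ x ^ (1 - s) := by
  rcases hx.eq_or_lt with h0 | h0
  · rw [← h0, Real.zero_rpow (by linarith)]; simp
  · have h1 : x ^ (1 - s) = x * (Real.exp (-(s * 0.54)) * Real.exp (-(s * (Real.log x - 0.54)))) := by
      rw [← Real.exp_add, Real.rpow_def_of_pos h0]
      nth_rewrite 2 [← Real.exp_log h0]
      rw [← Real.exp_add]; congr 1; ring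
    rw [h1]
    have h2 : 1 - s * (bhQ x - 0.54) ≤ Real.exp (-(s * (Real.log x - 0.54))) := by
      have := Real.add_one_le_exp (-(s * (Real.log x - 0.54)))
      have := mul_le_mul_of_nonneg_left (bh_log_le_s13 x h0) hs
      linarith
    have h3 := Real.exp_pos (-(s * 0.54))
    calc _ = x * Real.exp (-(s * 0.54)) * (1 - s * (bhQ x - 0.54)) := by ring
      _ ≤ x * Real.exp (-(s * 0.54)) * Real.exp (-(s * (Real.log x - 0.54))) := by gcongr
      _ = _ := by ring

/-- primitive fifth root of unity -/
noncomputable def bhZ : ℂ := Complex.exp (2 * π * Complex.I / 5)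

theorem bhZ_prim : IsPrimitiveRoot bhZ 5 := by
  have := Complex.isPrimitiveRoot_exp 5 (by norm_num)
  simpa [bhZ] using this

theorem bhZ_norm : ‖bhZ‖ = 1 := bhZ_prim.norm'_eq_one (by norm_num)

theorem bhZ_sum (k : ℕ) (hk : ¬ 5 ∣ k) : ∑ j : Fin 5, (bhZ ^ (j : ℕ)) ^ k = 0 := by
  have hp : IsPrimitiveRoot (bhZ ^ k) 5 := by
    apply bhZ_prim.pow_of_coprime
    exact ((Nat.Prime.coprime_iff_not_dvd (by norm_num)).2 hk).symm
  have := hp.geom_sum_eq_zero (by norm_num)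
  rw [← Fin.sum_univ_eq_sum_range (fun i => (bhZ ^ k) ^ i) 5] at this
  rw [← this]
  refine Finset.sum_congr rfl fun j _ => ?_
  rw [← pow_mul, ← pow_mul, mul_comm]

theorem bh_step (b a : ℂ) (y t : ℝ) (hy : y = ‖b‖ ^ 2) (ht : t = ‖a‖ ^ 2) :
    (∑ j : Fin 5, (‖a * bhZ ^ (j : ℕ) + b‖ ^ 2) = 5 * (y + t)) ∧
    (∑ j : Fin 5, (‖a * bhZ ^ (j : ℕ) + b‖ ^ 2) ^ 2 = 5 * (y ^ 2 + 4 * y * t + t ^ 2)) ∧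
    (∑ j : Fin 5, (‖a * bhZ ^ (j : ℕ) + b‖ ^ 2) ^ 3 =
      5 * (y ^ 3 + 9 * y ^ 2 * t + 9 * y * t ^ 2 + t ^ 3)) ∧
    (∑ j : Fin 5, (‖a * bhZ ^ (j : ℕ) + b‖ ^ 2) ^ 4 =
      5 * (y ^ 4 + 16 * y ^ 3 * t + 36 * y ^ 2 * t ^ 2 + 16 * y * t ^ 3 + t ^ 4)) := by
  set e : Fin 5 → ℂ := fun j => bhZ ^ (j : ℕ) with he
  have he5 : ∀ j, e j ^ 5 = 1 := by
    intro j; simp only [he]; rw [← pow_mul, mul_comm, pow_mul, bhZ_prim.pow_eq_one, one_pow]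
  have hen : ∀ j, ‖e j‖ = 1 := by intro j; simp [he, bhZ_norm]
  have hec : ∀ j, (starRingEnd ℂ) (e j) = e j ^ 4 := by
    intro j
    have h1 : (starRingEnd ℂ) (e j) * e j = 1 := by
      rw [mul_comm, Complex.mul_conj, Complex.normSq_eq_norm_sq, hen]; simp
    calc (starRingEnd ℂ) (e j) = (starRingEnd ℂ) (e j) * e j ^ 5 := by rw [he5, mul_one]
      _ = ((starRingEnd ℂ) (e j) * e j) * e j ^ 4 := by ring
      _ = _ := by rw [h1, one_mul]
  set c := starRingEnd ℂ with hcdef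
  have hX : ∀ j, ((‖a * e j + b‖ ^ 2 : ℝ) : ℂ) = (y + t) + (a * c b * e j + c a * b * e j ^ 4) := by
    intro j
    have h1 : ((‖a * e j + b‖ ^ 2 : ℝ) : ℂ) = (a * e j + b) * c (a * e j + b) := by
      rw [hcdef, Complex.mul_conj, Complex.normSq_eq_norm_sq]
    have h2 : (y : ℂ) = b * c b := by rw [hy, hcdef, Complex.mul_conj, Complex.normSq_eq_norm_sq]
    have h3 : (t : ℂ) = a * c a := by rw [ht, hcdef, Complex.mul_conj, Complex.normSq_eq_norm_sq]
    have h4 : c (a * e j + b) = c a * e j ^ 4 + c b := by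
      rw [map_add, map_mul, hec]
    rw [h1, h2, h3, h4]
    linear_combination (a * c a) * he5 j
  have s1 : ∑ j, e j = 0 := by simpa using bhZ_sum 1 (by norm_num)
  have s2 : ∑ j, e j ^ 2 = 0 := bhZ_sum 2 (by norm_num)
  have s3 : ∑ j, e j ^ 3 = 0 := bhZ_sum 3 (by norm_num)
  have s4 : ∑ j, e j ^ 4 = 0 := bhZ_sum 4 (by norm_num)
  have hyt : (a * c b) * (c a * b) = (y : ℂ) * t := by
    have h2 : (y : ℂ) = b * c b := by rw [hy, hcdef, Complex.mul_conj, Complex.normSq_eq_norm_sq]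
    have h3 : (t : ℂ) = a * c a := by rw [ht, hcdef, Complex.mul_conj, Complex.normSq_eq_norm_sq]
    rw [h2, h3]; ring
  generalize a * c b = v at *
  generalize c a * b = u at *
  have gen : ∀ A0 A1 A2 A3 A4 : ℂ, ∑ j, (A0 + A1 * e j + A2 * e j ^ 2 + A3 * e j ^ 3 + A4 * e j ^ 4) = 5 * A0 := by
    intro A0 A1 A2 A3 A4
    simp only [Finset.sum_add_distrib, ← Finset.mul_sum, s1, s2, s3, s4]
    simp
  have w2 : ∀ j, (v * e j + u * e j ^ 4) ^ 2 = 2 * (y * t) + v ^ 2 * e j ^ 2 + u ^ 2 * e j ^ 3 := by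
    intro j
    linear_combination (2 * v * u + u ^ 2 * e j ^ 3) * he5 j + 2 * hyt
  have w3 : ∀ j, (v * e j + u * e j ^ 4) ^ 3 = 3 * v * (y * t) * e j + 3 * u * (y * t) * e j ^ 4
      + v ^ 3 * e j ^ 3 + u ^ 3 * e j ^ 2 := by
    intro j
    rw [pow_succ, w2]
    linear_combination (u ^ 3 * e j ^ 2 + v ^ 2 * u * e j) * he5 j + (v * e j + u * e j ^ 4) * hyt
  have w4 : ∀ j, (v * e j + u * e j ^ 4) ^ 4 = 6 * (y * t) ^ 2 + 4 * v ^ 2 * (y * t) * e j ^ 2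
      + 4 * u ^ 2 * (y * t) * e j ^ 3 + v ^ 4 * e j ^ 4 + u ^ 4 * e j := by
    intro j
    have hsq : (v * e j + u * e j ^ 4) ^ 4 = ((v * e j + u * e j ^ 4) ^ 2) ^ 2 := by ring
    rw [hsq, w2]
    linear_combination (2 * v ^ 2 * u ^ 2 + u ^ 4 * e j) * he5 j + (2 * v * u + 2 * y * t) * hyt
  have real_of : ∀ m : ℕ, ∀ R : ℝ, ∑ j, (((y : ℂ) + t) + (v * e j + u * e j ^ 4)) ^ m = (R : ℂ) →
      ∑ j, (‖a * e j + b‖ ^ 2) ^ m = R := by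
    intro m R h
    apply Complex.ofReal_injective
    rw [← h]
    push_cast
    refine Finset.sum_congr rfl fun j _ => ?_
    rw [← hX]; push_cast; rfl
  refine ⟨?_, ?_, ?_, ?_⟩
  · have := real_of 1 (5 * (y + t)) ?_
    · simpa using this
    · push_cast
      rw [← gen _ v 0 0 u]
      refine Finset.sum_congr rfl fun j _ => ?_
      ring
  · apply real_of
    push_cast
    rw [← gen _ (2 * (y + t) * v) (v ^ 2) (u ^ 2) (2 * (y + t) * u)]
    refine Finset.sum_congr rfl fun j _ => ?_
    linear_combination w2 j
  · apply real_of
    push_cast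
    rw [← gen _ (3 * (y + t) ^ 2 * v + 3 * v * (y * t)) (3 * (y + t) * v ^ 2 + u ^ 3)
      (3 * (y + t) * u ^ 2 + v ^ 3) (3 * (y + t) ^ 2 * u + 3 * u * (y * t))]
    refine Finset.sum_congr rfl fun j _ => ?_
    linear_combination 3 * (y + t) * w2 j + w3 j
  · apply real_of
    push_cast
    rw [← gen _ (4 * (y + t) ^ 3 * v + 4 * (y + t) * (3 * v * (y * t)) + u ^ 4)
      (6 * (y + t) ^ 2 * v ^ 2 + 4 * (y + t) * u ^ 3 + 4 * v ^ 2 * (y * t))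
      (6 * (y + t) ^ 2 * u ^ 2 + 4 * (y + t) * v ^ 3 + 4 * u ^ 2 * (y * t))
      (4 * (y + t) ^ 3 * u + 4 * (y + t) * (3 * u * (y * t)) + v ^ 4)]
    refine Finset.sum_congr rfl fun j _ => ?_
    linear_combination 6 * (y + t) ^ 2 * w2 j + 4 * (y + t) * w3 j + w4 j

/-- squared modulus of the random sum -/
noncomputable def bhX {N : ℕ} (a : Fin N → ℂ) (ω : Fin N → Fin 5) : ℝ :=
  ‖∑ i, a i * bhZ ^ (ω i : ℕ)‖ ^ 2

theorem bh_moments_s13 (N : ℕ) (a : Fin N → ℂ) (T s2 s3 s4 : ℝ) (hT : T = ∑ i, ‖a i‖ ^ 2)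
    (h2 : s2 = ∑ i, (‖a i‖ ^ 2) ^ 2) (h3 : s3 = ∑ i, (‖a i‖ ^ 2) ^ 3)
    (h4 : s4 = ∑ i, (‖a i‖ ^ 2) ^ 4) :
    (∑ ω, bhX a ω = 5 ^ N * T) ∧ (∑ ω, bhX a ω ^ 2 = 5 ^ N * (2 * T ^ 2 - s2)) ∧
    (∑ ω, bhX a ω ^ 3 = 5 ^ N * (6 * T ^ 3 - 9 * T * s2 + 4 * s3)) ∧
    (∑ ω, bhX a ω ^ 4 = 5 ^ N * (24 * T ^ 4 - 72 * T ^ 2 * s2 + 18 * s2 ^ 2 + 64 * T * s3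
      - 33 * s4)) := by
  induction N generalizing T s2 s3 s4 with
  | zero => simp [bhX] at *; simp [*]
  | succ N ih =>
    obtain ⟨i1, i2, i3, i4⟩ := ih (fun i => a i.succ) _ _ _ _ rfl rfl rfl rfl
    rw [Fin.sum_univ_succ] at hT h2 h3 h4
    set T' := ∑ i : Fin N, ‖a i.succ‖ ^ 2
    set s2' := ∑ i : Fin N, (‖a i.succ‖ ^ 2) ^ 2
    set s3' := ∑ i : Fin N, (‖a i.succ‖ ^ 2) ^ 3
    set s4' := ∑ i : Fin N, (‖a i.succ‖ ^ 2) ^ 4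
    have hX : ∀ (j : Fin 5) (ω : Fin N → Fin 5), bhX a (Fin.cons j ω : Fin (N + 1) → Fin 5) =
        ‖a 0 * bhZ ^ (j : ℕ) + ∑ i, a i.succ * bhZ ^ (ω i : ℕ)‖ ^ 2 := by
      intro j ω
      simp [bhX, Fin.sum_univ_succ]
    have st := fun ω : Fin N → Fin 5 => bh_step (∑ i, a i.succ * bhZ ^ (ω i : ℕ)) (a 0) _ _ rfl rfl
    have hY : ∀ ω : Fin N → Fin 5, ‖∑ i, a i.succ * bhZ ^ (ω i : ℕ)‖ ^ 2 = bhX (fun i => a i.succ) ω :=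
      fun ω => rfl
    simp only [hY] at st
    set t := ‖a 0‖ ^ 2
    have c0 : ∑ ω : Fin N → Fin 5, (1 : ℝ) = 5 ^ N := by simp
    refine ⟨?_, ?_, ?_, ?_⟩
    · rw [bh_sum_cons_s13, Finset.sum_comm]
      simp only [hX, (st _).1]
      calc _ = 5 * (∑ ω, bhX (fun i => a i.succ) ω + t * ∑ ω : Fin N → Fin 5, (1 : ℝ)) := by
            simp only [Finset.mul_sum, ← Finset.sum_add_distrib]
            exact Finset.sum_congr rfl fun ω _ => by ring
        _ = _ := by rw [i1, c0, hT]; ring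
    · rw [bh_sum_cons_s13, Finset.sum_comm]
      simp only [hX, (st _).2.1]
      calc _ = 5 * (∑ ω, bhX (fun i => a i.succ) ω ^ 2 + 4 * t * ∑ ω, bhX (fun i => a i.succ) ω
              + t ^ 2 * ∑ ω : Fin N → Fin 5, (1 : ℝ)) := by
            simp only [Finset.mul_sum, ← Finset.sum_add_distrib]
            exact Finset.sum_congr rfl fun ω _ => by ring
        _ = _ := by rw [i1, i2, c0, hT, h2]; ring
    · rw [bh_sum_cons_s13, Finset.sum_comm]
      simp only [hX, (st _).2.2.1]
      calc _ = 5 * (∑ ω, bhX (fun i => a i.succ) ω ^ 3 + 9 * t * ∑ ω, bhX (fun i => a i.succ) ω ^ 2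
              + 9 * t ^ 2 * ∑ ω, bhX (fun i => a i.succ) ω
              + t ^ 3 * ∑ ω : Fin N → Fin 5, (1 : ℝ)) := by
            simp only [Finset.mul_sum, ← Finset.sum_add_distrib]
            exact Finset.sum_congr rfl fun ω _ => by ring
        _ = _ := by rw [i1, i2, i3, c0, hT, h2, h3]; ring
    · rw [bh_sum_cons_s13, Finset.sum_comm]
      simp only [hX, (st _).2.2.2]
      calc _ = 5 * (∑ ω, bhX (fun i => a i.succ) ω ^ 4 + 16 * t * ∑ ω, bhX (fun i => a i.succ) ω ^ 3
              + 36 * t ^ 2 * ∑ ω, bhX (fun i => a i.succ) ω ^ 2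
              + 16 * t ^ 3 * ∑ ω, bhX (fun i => a i.succ) ω
              + t ^ 4 * ∑ ω : Fin N → Fin 5, (1 : ℝ)) := by
            simp only [Finset.mul_sum, ← Finset.sum_add_distrib]
            exact Finset.sum_congr rfl fun ω _ => by ring
        _ = _ := by rw [i1, i2, i3, i4, c0, hT, h2, h3, h4]; ring

theorem bh_entropy (N : ℕ) (a : Fin N → ℂ) (hT : ∑ i, ‖a i‖ ^ 2 = 1) :
    ∑ ω, bhX a ω * bhQ (bhX a ω) ≤ 5 ^ N * 0.54 := by
  obtain ⟨m1, m2, m3, m4⟩ := bh_moments_s13 N a _ _ _ _ rfl rfl rfl rfl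
  rw [hT] at m1 m2 m3 m4
  have e : ∑ ω, bhX a ω * bhQ (bhX a ω) = -1.32 * ∑ ω, bhX a ω + 155 / 92 * ∑ ω, bhX a ω ^ 2
      + (- 73 / 184) * ∑ ω, bhX a ω ^ 3 + 5 / 138 * ∑ ω, bhX a ω ^ 4 := by
    simp only [Finset.mul_sum, ← Finset.sum_add_distrib]
    exact Finset.sum_congr rfl fun ω _ => by unfold bhQ; ring
  rw [e, m1, m2, m3, m4]
  set t : Fin N → ℝ := fun i => ‖a i‖ ^ 2 with ht
  have ht0 : ∀ i, 0 ≤ t i := fun i => sq_nonneg _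
  have ht1 : ∀ i, t i ≤ 1 := fun i => by
    rw [← hT]; exact Finset.single_le_sum (f := t) (fun i _ => ht0 i) (Finset.mem_univ i)
  have hcs : (∑ i, t i ^ 2) ^ 2 ≤ ∑ i, t i ^ 3 := by
    have := Finset.sum_sq_le_sum_mul_sum_of_sq_le_mul Finset.univ (r := fun i => t i ^ 2) (f := t)
      (g := fun i => t i ^ 3) (fun i _ => ht0 i) (fun i _ => pow_nonneg (ht0 i) 3)
      (fun i _ => le_of_eq (by ring))
    have h' : ∑ i, t i = 1 := hT
    rw [h', one_mul] at this
    exact this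
  have hterm : 0 ≤ (155 / 92 - 9 * (73 / 184) + 72 * (5 / 138)) * ∑ i, t i ^ 2
      + (4 * (73 / 184) - 82 * (5 / 138)) * ∑ i, t i ^ 3 + 33 * (5 / 138) * ∑ i, t i ^ 4 := by
    simp only [Finset.mul_sum, ← Finset.sum_add_distrib]
    refine Finset.sum_nonneg fun i _ => ?_
    have h0 := ht0 i
    have h1 := ht1 i
    have : 0 ≤ t i ^ 2 * ((155 / 92 - 9 * (73 / 184) + 72 * (5 / 138))
      + (4 * (73 / 184) - 82 * (5 / 138)) * t i + 33 * (5 / 138) * t i ^ 2) := by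
      apply mul_nonneg (sq_nonneg _)
      nlinarith [sq_nonneg (t i - 0.5), sq_nonneg (t i - 0.55)]
    linarith
  have h5 : (0 : ℝ) < 5 ^ N := by positivity
  change -1.32 * (5 ^ N * 1) + 155 / 92 * (5 ^ N * (2 * 1 ^ 2 - ∑ i, t i ^ 2))
    + -73 / 184 * (5 ^ N * (6 * 1 ^ 3 - 9 * 1 * ∑ i, t i ^ 2 + 4 * ∑ i, t i ^ 3))
    + 5 / 138 * (5 ^ N * (24 * 1 ^ 4 - 72 * 1 ^ 2 * ∑ i, t i ^ 2 + 18 * (∑ i, t i ^ 2) ^ 2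
      + 64 * 1 * ∑ i, t i ^ 3 - 33 * ∑ i, t i ^ 4)) ≤ 5 ^ N * 0.54
  have key : -1.32 * 1 + 155 / 92 * (2 * 1 ^ 2 - ∑ i, t i ^ 2)
    + -73 / 184 * (6 * 1 ^ 3 - 9 * 1 * ∑ i, t i ^ 2 + 4 * ∑ i, t i ^ 3)
    + 5 / 138 * (24 * 1 ^ 4 - 72 * 1 ^ 2 * ∑ i, t i ^ 2 + 18 * (∑ i, t i ^ 2) ^ 2
      + 64 * 1 * ∑ i, t i ^ 3 - 33 * ∑ i, t i ^ 4) ≤ 0.54 := by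
    linarith
  have := mul_le_mul_of_nonneg_left key h5.le
  linarith

theorem bh_khinchine_s13 (N : ℕ) (a : Fin N → ℂ) (s : ℝ) (hs : 0 ≤ s) (hs1 : s < 1) :
    5 ^ N * (∑ i, ‖a i‖ ^ 2) ^ (1 - s) ≤ Real.exp (s * 0.54) * ∑ ω, bhX a ω ^ (1 - s) := by
  have hX0 : ∀ ω, 0 ≤ bhX a ω := fun ω => sq_nonneg _
  set T := ∑ i, ‖a i‖ ^ 2 with hT
  have hT0 : 0 ≤ T := Finset.sum_nonneg fun i _ => sq_nonneg _
  rcases hT0.eq_or_lt with h0 | h0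
  · rw [← h0, Real.zero_rpow (by linarith), mul_zero]
    exact mul_nonneg (Real.exp_pos _).le (Finset.sum_nonneg fun ω _ => Real.rpow_nonneg (hX0 ω) _)
  · set r : ℝ := √T
    have hr : 0 < r := Real.sqrt_pos.2 h0
    have hr2 : r ^ 2 = T := Real.sq_sqrt hT0
    set a' : Fin N → ℂ := fun i => a i / r with ha'
    have hT' : ∑ i, ‖a' i‖ ^ 2 = 1 := by
      simp only [ha', norm_div, div_pow, Complex.norm_real, Real.norm_eq_abs, sq_abs, hr2]
      rw [← Finset.sum_div, ← hT, div_self h0.ne']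
    have hXX : ∀ ω, bhX a ω = T * bhX a' ω := by
      intro ω
      have : ∑ i, a i * bhZ ^ (ω i : ℕ) = r * ∑ i, a' i * bhZ ^ (ω i : ℕ) := by
        rw [Finset.mul_sum]
        refine Finset.sum_congr rfl fun i _ => ?_
        have : (r : ℂ) ≠ 0 := by exact_mod_cast hr.ne'
        simp only [ha']; field_simp
      simp only [bhX, this, norm_mul, mul_pow, Complex.norm_real, Real.norm_eq_abs, sq_abs, hr2]
    have hX0' : ∀ ω, 0 ≤ bhX a' ω := fun ω => sq_nonneg _
    have e1 : ∑ ω, bhX a ω ^ (1 - s) = T ^ (1 - s) * ∑ ω, bhX a' ω ^ (1 - s) := by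
      rw [Finset.mul_sum]
      exact Finset.sum_congr rfl fun ω _ => by rw [hXX, Real.mul_rpow hT0 (hX0' ω)]
    have low : Real.exp (-(s * 0.54)) * 5 ^ N ≤ ∑ ω, bhX a' ω ^ (1 - s) := by
      refine le_trans ?_ (Finset.sum_le_sum fun ω _ => bh_rpow_ge (bhX a' ω) s (hX0' ω) hs hs1)
      rw [← Finset.mul_sum]
      refine mul_le_mul_of_nonneg_left ?_ (Real.exp_pos _).le
      have hm := (bh_moments_s13 N a' _ _ _ _ rfl rfl rfl rfl).1
      rw [hT', mul_one] at hm
      have hE := bh_entropy N a' hT'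
      rw [Finset.sum_sub_distrib, ← Finset.mul_sum, Finset.sum_sub_distrib, ← Finset.mul_sum, hm]
      have : s * (∑ ω, bhX a' ω * bhQ (bhX a' ω) - 0.54 * 5 ^ N) ≤ 0 :=
        mul_nonpos_of_nonneg_of_nonpos hs (by linarith)
      linarith
    rw [e1]
    calc 5 ^ N * T ^ (1 - s) = Real.exp (s * 0.54) * (T ^ (1 - s) * (Real.exp (-(s * 0.54)) * 5 ^ N)) := by
          have : Real.exp (s * 0.54) * Real.exp (-(s * 0.54)) = 1 := by
            rw [← Real.exp_add]; simp
          linear_combination (-(5 ^ N * T ^ (1 - s))) * this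
      _ ≤ _ := by gcongr

theorem bh_lin {N : ℕ} {E : Type*} [AddCommGroup E] [Module ℂ E] [TopologicalSpace E]
    (f : (Fin N → ℂ) →L[ℂ] E) (z : Fin N → ℂ) :
    f z = ∑ j, z j • f (Pi.single j (1 : ℂ)) := by
  conv_lhs => rw [pi_eq_sum_univ' z]
  rw [map_sum]
  refine Finset.sum_congr rfl fun j _ => ?_
  rw [map_smul]

theorem bh_base (N : ℕ) (U : ContinuousMultilinearMap ℂ (fun _ : Fin 1 => (Fin N → ℂ)) ℂ) :
    ∑ i : Fin 1 → Fin N, ‖U (fun k => Pi.single (i k) (1 : ℂ))‖ ≤ ‖U‖ := by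
  rw [← (Equiv.funUnique (Fin 1) (Fin N)).symm.sum_comp]
  set f : (Fin N → ℂ) →L[ℂ] ℂ := U.toContinuousLinearMap (fun _ => 0) 0 with hf
  have hfz : ∀ z, f z = U (fun _ => z) := by
    intro z
    simp only [hf, ContinuousMultilinearMap.toContinuousLinearMap]
    change U (Function.update (fun _ => 0) 0 z) = _
    congr 1
    ext i : 1
    rw [Subsingleton.elim i 0]; simp
  set u : Fin N → ℂ := fun j => f (Pi.single j (1 : ℂ)) with hu
  set z : Fin N → ℂ := fun j => (starRingEnd ℂ) (u j) / ‖u j‖ with hz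
  have hz1 : ‖z‖ ≤ 1 := by
    rw [pi_norm_le_iff_of_nonneg zero_le_one]
    intro j
    simp only [hz, norm_div, RCLike.norm_conj, Complex.norm_real, norm_norm]
    exact div_self_le_one _
  have h1 : f z = ((∑ j, ‖u j‖ : ℝ) : ℂ) := by
    rw [bh_lin f z]
    push_cast
    refine Finset.sum_congr rfl fun j _ => ?_
    change z j • u j = _
    by_cases h0 : u j = 0
    · simp [h0]
    · have : (‖u j‖ : ℂ) ≠ 0 := by exact_mod_cast (norm_ne_zero_iff.2 h0)
      simp only [hz, smul_eq_mul]
      rw [div_mul_eq_mul_div, mul_comm, Complex.mul_conj, Complex.normSq_eq_norm_sq]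
      push_cast; field_simp
  have h2 : ‖f z‖ ≤ ‖U‖ := by
    rw [hfz]
    refine (U.le_opNorm _).trans ?_
    simp only [Finset.prod_const, Finset.card_univ, Fintype.card_fin, pow_one]
    exact mul_le_of_le_one_right (norm_nonneg _) hz1
  rw [h1, Complex.norm_real, Real.norm_of_nonneg (Finset.sum_nonneg fun _ _ => norm_nonneg _)] at h2
  refine le_trans (le_of_eq ?_) h2
  refine Finset.sum_congr rfl fun j _ => ?_
  simp only [hu, hfz]
  rfl

theorem bh_mixed (N m : ℕ) (D : ℝ) (hD : 0 ≤ D)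
    (ih : ∀ U : ContinuousMultilinearMap ℂ (fun _ : Fin (m + 1) => (Fin N → ℂ)) ℂ,
      ∑ i : Fin (m + 1) → Fin N, ‖U (fun k => Pi.single (i k) (1 : ℂ))‖ ^ (2 * ((m : ℝ) + 1) / (m + 2))
        ≤ (D * ‖U‖) ^ (2 * ((m : ℝ) + 1) / (m + 2)))
    (U : ContinuousMultilinearMap ℂ (fun _ : Fin (m + 2) => (Fin N → ℂ)) ℂ) (k : Fin (m + 2)) :
    ∑ y : Fin (m + 1) → Fin N,
      (∑ j, ‖U (fun l => Pi.single ((Fin.insertNth k j y : Fin (m + 2) → Fin N) l) (1 : ℂ))‖ ^ 2)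
        ^ (((m : ℝ) + 1) / (m + 2))
      ≤ Real.exp (0.54 / (m + 2)) * (D * ‖U‖) ^ (2 * ((m : ℝ) + 1) / (m + 2)) := by
  set V : (Fin N → ℂ) →L[ℂ] ContinuousMultilinearMap ℂ (fun _ : Fin (m + 1) => (Fin N → ℂ)) ℂ :=
    U.curryMid k with hV
  set E : (Fin (m + 1) → Fin N) → (Fin (m + 1) → Fin N → ℂ) := fun y l => Pi.single (y l) (1 : ℂ)
    with hE
  have hUV : ∀ j y, U (fun l => Pi.single ((Fin.insertNth k j y : Fin (m + 2) → Fin N) l) (1 : ℂ))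
      = V (Pi.single j 1) (E y) := by
    intro j y
    rw [hV]
    change _ = U (Fin.insertNth k (Pi.single j (1 : ℂ)) (E y))
    congr 1
    ext l : 1
    refine Fin.succAboveCases k ?_ (fun l => ?_) l
    · simp
    · simp [hE]
  simp only [hUV]
  set Z : (Fin N → Fin 5) → (Fin N → ℂ) := fun ω j => bhZ ^ (ω j : ℕ) with hZ
  have hZn : ∀ ω, ‖Z ω‖ ≤ 1 := by
    intro ω
    rw [pi_norm_le_iff_of_nonneg zero_le_one]
    intro j
    simp [hZ, bhZ_norm]
  have hVn : ∀ ω, ‖V (Z ω)‖ ≤ ‖U‖ := by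
    intro ω
    refine (V.le_opNorm _).trans ?_
    have : ‖V‖ ≤ ‖U‖ := le_of_eq (U.norm_curryMid k)
    calc ‖V‖ * ‖Z ω‖ ≤ ‖U‖ * 1 := mul_le_mul this (hZn ω) (norm_nonneg _) (norm_nonneg _)
      _ = _ := mul_one _
  have hm2 : (0 : ℝ) < (m : ℝ) + 2 := by positivity
  have h1s : 1 - 1 / ((m : ℝ) + 2) = ((m : ℝ) + 1) / (m + 2) := by field_simp; ring
  have hX : ∀ y ω, bhX (fun j => V (Pi.single j 1) (E y)) ω ^ (((m : ℝ) + 1) / (m + 2)) =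
      ‖V (Z ω) (E y)‖ ^ (2 * ((m : ℝ) + 1) / (m + 2)) := by
    intro y ω
    have : V (Z ω) (E y) = ∑ j, V (Pi.single j 1) (E y) * bhZ ^ (ω j : ℕ) := by
      rw [bh_lin V (Z ω), _root_.sum_apply]
      refine Finset.sum_congr rfl fun j _ => ?_
      rw [_root_.smul_apply, smul_eq_mul, mul_comm]
    rw [bhX, ← this, ← Real.rpow_natCast, ← Real.rpow_mul (norm_nonneg _)]
    congr 1; push_cast; ring
  have kh := fun y => bh_khinchine_s13 N (fun j => V (Pi.single j 1) (E y)) (1 / ((m : ℝ) + 2))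
    (by positivity) (by rw [div_lt_one hm2]; linarith [(Nat.cast_nonneg m : (0 : ℝ) ≤ m)])
  simp only [h1s, hX] at kh
  have h5 : (0 : ℝ) < 5 ^ N := by positivity
  refine le_of_mul_le_mul_left ?_ h5
  rw [Finset.mul_sum]
  refine (Finset.sum_le_sum fun y _ => kh y).trans ?_
  rw [← Finset.mul_sum, Finset.sum_comm]
  have : ∑ ω : Fin N → Fin 5, ∑ y, ‖V (Z ω) (E y)‖ ^ (2 * ((m : ℝ) + 1) / (m + 2)) ≤
      ∑ ω : Fin N → Fin 5, (D * ‖U‖) ^ (2 * ((m : ℝ) + 1) / (m + 2)) := by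
    refine Finset.sum_le_sum fun ω _ => (ih (V (Z ω))).trans ?_
    exact Real.rpow_le_rpow (by positivity) (mul_le_mul_of_nonneg_left (hVn ω) hD) (by positivity)
  refine (mul_le_mul_of_nonneg_left this (Real.exp_pos _).le).trans (le_of_eq ?_)
  simp only [Finset.sum_const, Finset.card_univ, Fintype.card_fun, Fintype.card_fin, nsmul_eq_mul]
  push_cast
  rw [show 1 / ((m : ℝ) + 2) * 0.54 = 0.54 / (m + 2) by ring]
  ring

theorem bh_main_s13 (N m : ℕ) (U : ContinuousMultilinearMap ℂ (fun _ : Fin (m + 1) => (Fin N → ℂ)) ℂ) :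
    ∑ i : Fin (m + 1) → Fin N, ‖U (fun k => Pi.single (i k) (1 : ℂ))‖ ^ (2 * ((m : ℝ) + 1) / (m + 2))
      ≤ (Real.exp (0.27 * ∑ k ∈ Finset.range m, ((k : ℝ) + 1)⁻¹) * ‖U‖) ^
        (2 * ((m : ℝ) + 1) / (m + 2)) := by
  induction m with
  | zero =>
    have := bh_base N U
    simpa using this
  | succ m ih =>
    set D := Real.exp (0.27 * ∑ k ∈ Finset.range m, ((k : ℝ) + 1)⁻¹) with hD
    have hD0 : 0 ≤ D := (Real.exp_pos _).le
    have H := bh_blei_s13 m (fun i => ‖U (fun k => Pi.single (i k) (1 : ℂ))‖) (fun _ => norm_nonneg _) _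
      (fun k => bh_mixed N m D hD0 ih U k)
    have e1 : (2 * (((m + 1 : ℕ) : ℝ) + 1) / (((m + 1 : ℕ) : ℝ) + 2)) = 2 * ((m : ℝ) + 2) / (m + 3) := by
      push_cast; congr 1 <;> ring
    rw [e1]
    refine H.trans (le_of_eq ?_)
    have e2 : Real.exp (0.54 / (m + 2)) * (D * ‖U‖) ^ (2 * ((m : ℝ) + 1) / (m + 2)) =
        (Real.exp (0.27 * ∑ k ∈ Finset.range (m + 1), ((k : ℝ) + 1)⁻¹) * ‖U‖) ^
          (2 * ((m : ℝ) + 1) / (m + 2)) := by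
      rw [Finset.sum_range_succ, mul_add (0.27 : ℝ), Real.exp_add, ← hD, mul_comm D (Real.exp _), mul_assoc,
        Real.mul_rpow (x := Real.exp (0.27 * ((m : ℝ) + 1)⁻¹)) (Real.exp_pos _).le (by positivity),
        ← Real.exp_mul]
      congr 2
      field_simp; ring
    rw [e2, ← Real.rpow_mul (by positivity)]
    congr 1
    field_simp

theorem bh_numeric_s13 (M : ℕ) (hM : 2 ^ 14 ≤ M) :
    Real.exp (0.27 * ∑ k ∈ Finset.range M, ((k : ℝ) + 1)⁻¹) ≤
      0.99137409768 * (M : ℝ) ^ (0.304975 : ℝ) := by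
  have hM0 : (0 : ℝ) < M := by
    have : 0 < M := lt_of_lt_of_le (by norm_num) hM
    exact_mod_cast this
  have h1 : ∑ k ∈ Finset.range M, ((k : ℝ) + 1)⁻¹ ≤ 1 + Real.log M := by
    have := harmonic_le_one_add_log M
    rw [harmonic] at this
    push_cast at this
    exact this
  have h2 : 9.7 ≤ Real.log M := by
    have : Real.log ((2 : ℝ) ^ 14) ≤ Real.log M :=
      Real.log_le_log (by positivity) (by exact_mod_cast hM)
    rw [Real.log_pow] at this
    have := Real.log_two_gt_d9
    push_cast at *
    linarith
  have h3 : -0.009 ≤ Real.log 0.99137409768 := by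
    have := Real.one_sub_inv_le_log_of_pos (x := 0.99137409768) (by norm_num)
    norm_num at this ⊢
    linarith
  have h4 : 0.99137409768 * (M : ℝ) ^ (0.304975 : ℝ) =
      Real.exp (Real.log 0.99137409768 + Real.log M * 0.304975) := by
    rw [Real.exp_add, Real.exp_log (by norm_num), Real.rpow_def_of_pos hM0]
  rw [h4, Real.exp_le_exp]
  linarith

theorem stmt13 (n : ℕ) (hn : 2 ^ 14 < n) (N : ℕ) (hN : 0 < N)
    (U : ContinuousMultilinearMap ℂ (fun _ : Fin n => (Fin N → ℂ)) ℂ) :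
    BHcomplex n N U ≤ 0.99137409768 * ((n : ℝ) - 1) ^ (0.304975 : ℝ) * ‖U‖ := by
  obtain ⟨m, rfl⟩ : ∃ m, n = m + 1 := ⟨n - 1, by omega⟩
  have hnum := bh_numeric_s13 m (by omega)
  have H := bh_main_s13 N m U
  unfold BHcomplex
  have e1 : (2 * ((m + 1 : ℕ) : ℝ)) / (((m + 1 : ℕ) : ℝ) + 1) = 2 * ((m : ℝ) + 1) / (m + 2) := by
    push_cast; congr 1; ring
  have e2 : (((m + 1 : ℕ) : ℝ) + 1) / (2 * ((m + 1 : ℕ) : ℝ)) = (2 * ((m : ℝ) + 1) / (m + 2))⁻¹ := by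
    rw [← e1, inv_div]
  have e3 : ((m + 1 : ℕ) : ℝ) - 1 = m := by push_cast; ring
  rw [e1, e2, e3]
  have hr : (2 * ((m : ℝ) + 1) / (m + 2)) ≠ 0 := by positivity
  calc _ ≤ ((Real.exp (0.27 * ∑ k ∈ Finset.range m, ((k : ℝ) + 1)⁻¹) * ‖U‖) ^
        (2 * ((m : ℝ) + 1) / (m + 2))) ^ (2 * ((m : ℝ) + 1) / (m + 2))⁻¹ := by
        exact Real.rpow_le_rpow (Finset.sum_nonneg fun _ _ => Real.rpow_nonneg (norm_nonneg _) _) H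
          (by positivity)
    _ = Real.exp (0.27 * ∑ k ∈ Finset.range m, ((k : ℝ) + 1)⁻¹) * ‖U‖ :=
        Real.rpow_rpow_inv (by positivity) hr
    _ ≤ _ := mul_le_mul_of_nonneg_right hnum (norm_nonneg _)
end
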